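/- arXiv:1701.01033 — 5 statements merged into one kernel-verified Lean document; each statement's English description precedes it below -/
import Mathlib

section
/- Let N ∈ {1,2,3,4} and let m_1,…,m_N ∈ ℝ³ ∖ {0} be such that every subfamily consisting of at most three of the m_j is linearly independent. Suppose s_1,…,s_N and s̃_1,…,s̃_N are vectors in ℝ³ satisfying s_j·m_j = 0 and s̃_j·m_j = 0 for all j, and Σ_{j=1}^N s_j⊗m_j = Σ_{j=1}^N s̃_j⊗m_j. Then s_j = s̃_j for every j = 1,…,N. Equivalently, if s_j·m_j = 0 for all j and Σ_{j=1}^N s_j⊗m_j = 0, then s_j = 0 for all j. -/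
open Matrix

theorem coeff_zero_aux {N : ℕ} (m : Fin N → (Fin 3 → ℝ)) (t : Finset (Fin N))
    (h : LinearIndependent ℝ (fun j : {x // x ∈ t} => m j.1))
    (c : Fin N → ℝ) (hc : ∑ j, c j • m j = 0) (hz : ∀ j, j ∉ t → c j = 0) : ∀ j, c j = 0 := by
  intro j
  by_cases hj : j ∈ t
  · rw [Fintype.linearIndependent_iff] at h
    refine h (fun x => c x.1) ?_ ⟨j, hj⟩
    rw [Finset.sum_coe_sort t (fun x => c x • m x), ← hc]
    apply Finset.sum_subset (Finset.subset_univ t)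
    intro x _ hx
    rw [hz x hx, zero_smul]
  · exact hz j hj

/-- If `N ∈ {1,2,3,4}`, any at most three of the `m_j` are linearly
independent, `s_j ⊥ m_j`, `s̃_j ⊥ m_j`, and `Σ s_j ⊗ m_j = Σ s̃_j ⊗ m_j`, then `s_j = s̃_j`
for every `j`. -/
theorem unique_slip_plane_decomposition
    (N : ℕ) (hN : 1 ≤ N ∧ N ≤ 4) (m : Fin N → (Fin 3 → ℝ))
    (hm0 : ∀ j, m j ≠ 0)
    (hindep : ∀ t : Finset (Fin N), t.card ≤ 3 →
      LinearIndependent ℝ (fun j : {x // x ∈ t} => m j.1))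
    (s s' : Fin N → (Fin 3 → ℝ))
    (hs : ∀ j, ∑ i, s j i * m j i = 0)
    (hs' : ∀ j, ∑ i, s' j i * m j i = 0)
    (hsum : ∑ j, vecMulVec (s j) (m j) = ∑ j, vecMulVec (s' j) (m j)) :
    ∀ j, s j = s' j := by
  have key : ∀ i, ∑ j, (s j i - s' j i) • m j = 0 := by
    intro i
    ext k
    have h := congrFun (congrFun hsum i) k
    simp only [Matrix.sum_apply, vecMulVec_apply] at h
    simp only [Finset.sum_apply, Pi.smul_apply, smul_eq_mul, sub_mul, Finset.sum_sub_distrib, h,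
      sub_self, Pi.zero_apply]
  have perp : ∀ j, ∑ i, (s j i - s' j i) * m j i = 0 := by
    intro j
    simp only [sub_mul, Finset.sum_sub_distrib, hs, hs', sub_self]
  obtain ⟨d, hd⟩ : ∃ d : Fin N → Fin 3 → ℝ, ∀ j i, d j i = s j i - s' j i :=
    ⟨fun j i => s j i - s' j i, fun _ _ => rfl⟩
  simp only [← hd] at key perp
  suffices H : ∀ j i, d j i = 0 by
    intro j
    ext i
    have := hd j i
    rw [H] at this
    linarith
  by_cases h3 : N ≤ 3
  · intro j i
    exact coeff_zero_aux m Finset.univ (hindep _ (by simpa using h3)) (fun j => d j i) (key i)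
      (fun j hj => absurd (Finset.mem_univ j) hj) j
  have h4 : N = 4 := by omega
  subst h4
  have L : ∀ (c : Fin 4 → ℝ) (a : Fin 4), ∑ j, c j • m j = 0 → c a = 0 → ∀ j, c j = 0 := by
    intro c a hc ha
    refine coeff_zero_aux m (Finset.univ.erase a) (hindep _ (by simp)) c hc ?_
    intro j hj
    have : j = a := by simpa using hj
    rw [this, ha]
  have par : ∀ j a i k, d j i * d a k = d j k * d a i := by
    intro j a i k
    have := L (fun j => d a k * d j i - d a i * d j k) a ?_ (by ring) j
    · linarith
    · simp only [sub_smul, mul_smul, Finset.sum_sub_distrib, ← Finset.smul_sum, key, smul_zero,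
        sub_self]
  intro a k
  by_contra hak
  have nz : ∀ j, d j k ≠ 0 := fun j hj => hak (L (fun j => d j k) j (key k) hj a)
  have orth : ∀ j, ∑ i, m j i * d a i = 0 := by
    intro j
    have h1 : d j k * ∑ i, m j i * d a i = d a k * ∑ i, d j i * m j i := by
      rw [Finset.mul_sum, Finset.mul_sum]
      refine Finset.sum_congr rfl fun i _ => ?_
      linear_combination (- m j i) * par j a i k
    rw [perp, mul_zero] at h1
    exact (mul_eq_zero.mp h1).resolve_left (nz j)
  have li : LinearIndependent ℝ (fun x : Fin 3 => m x.castSucc) := by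
    have h := hindep (Finset.univ.erase (Fin.last 3)) (by simp)
    exact h.comp (fun x : Fin 3 => ⟨x.castSucc, Finset.mem_erase.mpr ⟨Fin.castSucc_ne_last x, Finset.mem_univ _⟩⟩)
      (fun x y hxy => by simpa using hxy)
  let M : Matrix (Fin 3) (Fin 3) ℝ := fun x => m x.castSucc
  have hu : IsUnit M := Matrix.linearIndependent_rows_iff_isUnit.mp li
  have hz : M *ᵥ d a = 0 := by
    ext x
    exact orth x.castSucc
  have h0 : d a = 0 := by
    apply Matrix.mulVec_injective_of_isUnit hu
    rw [hz, Matrix.mulVec_zero]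
  exact hak (congrFun h0 k)
end

section
/- Let Ω ⊂ ℝ³ be a bounded open set, p ∈ [1,∞), and let m_1,…,m_N ∈ ℝ³ be pairwise linearly independent unit vectors. Suppose s_1^k,…,s_N^k ∈ L^p(Ω;ℝ³), k ∈ ℕ, satisfy: (P1) for each k, the single-plane condition, i.e. s_j^k(x)·m_j = 0 a.e. and |s_i^k(x)||s_j^k(x)| = 0 a.e. for i ≠ j; (P2) s_j^k ⇀ s_j weakly in L^p(Ω;ℝ³) for each j; (P3) there is K < ∞ with Σ_{j=1}^N ∫_Ω |∇_{m_j^⊥} s_j^k| ≤ K for all k. Then the weak limits satisfy the single-plane condition as well: s_j(x)·m_j = 0 a.e. and |s_i(x)||s_j(x)| = 0 a.e. for all i ≠ j. -/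
open MeasureTheory Filter Topology Matrix
open scoped ENNReal RealInnerProductSpace

noncomputable section

/-- Points of physical space `ℝ³`, with the Euclidean norm. -/
abbrev V3 : Type := EuclideanSpace ℝ (Fin 3)

/-- Real `3 × 3` matrices. -/
abbrev M3 : Type := Matrix (Fin 3) (Fin 3) ℝ

/-- Frobenius norm of a `3 × 3` matrix. -/
def frob (M : M3) : ℝ := Real.sqrt (∑ i, ∑ j, (M i j) ^ 2)

/-- The dyadic (outer) product `s ⊗ m`, i.e. the matrix `(sᵢ mₖ)`. -/
def outer (s m : V3) : M3 := fun i k => s i * m k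

/-- Cofactor matrix (transpose of the adjugate). -/
def cof (M : M3) : M3 := (Matrix.adjugate M)ᵀ

/-- Symmetric part `(M + Mᵀ)/2`. -/
def symPart (M : M3) : M3 := (1 / 2 : ℝ) • (M + Mᵀ)

/-- Membership in `L^p(Ω; ℝ³)` for a real exponent `p`. -/
def MemLpV (p : ℝ) (Ω : Set V3) (f : V3 → V3) : Prop :=
  AEStronglyMeasurable f (volume.restrict Ω) ∧ IntegrableOn (fun x => ‖f x‖ ^ p) Ω

/-- Membership in `L^p(Ω; ℝ^{3×3})` (Frobenius norm) for a real exponent `p`. -/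
def MemLpM (p : ℝ) (Ω : Set V3) (F : V3 → M3) : Prop :=
  (∀ i k : Fin 3, AEStronglyMeasurable (fun x => F x i k) (volume.restrict Ω)) ∧
    IntegrableOn (fun x => frob (F x) ^ p) Ω

/-- The `L^p`-norm of an `ℝ³`-valued map. -/
def lpNormV (p : ℝ) (Ω : Set V3) (f : V3 → V3) : ℝ := (∫ x in Ω, ‖f x‖ ^ p) ^ (1 / p)

/-- The `L^p`-norm of a matrix-valued map (Frobenius norm). -/
def lpNormM (p : ℝ) (Ω : Set V3) (F : V3 → M3) : ℝ := (∫ x in Ω, frob (F x) ^ p) ^ (1 / p)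

/-- Test functions for weak `L^p` convergence: elements of the conjugate space
`L^{p'}(Ω;ℝ³)`, where `p' = ∞` (bounded functions) if `p = 1` and
`p' = p/(p-1)` if `p > 1`. -/
def ConjTestV (p : ℝ) (Ω : Set V3) (g : V3 → V3) : Prop :=
  AEStronglyMeasurable g (volume.restrict Ω) ∧
    ((p = 1 ∧ ∃ Cb : ℝ, ∀ᵐ x ∂volume.restrict Ω, ‖g x‖ ≤ Cb) ∨
      (1 < p ∧ IntegrableOn (fun x => ‖g x‖ ^ (p / (p - 1))) Ω))

/-- Weak convergence `sₖ ⇀ s` in `L^p(Ω;ℝ³)`. -/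
def WeakLpV (p : ℝ) (Ω : Set V3) (sk : ℕ → V3 → V3) (s : V3 → V3) : Prop :=
  ∀ g : V3 → V3, ConjTestV p Ω g →
    Tendsto (fun k => ∫ x in Ω, ⟪sk k x, g x⟫) atTop (nhds (∫ x in Ω, ⟪s x, g x⟫))

/-- Test functions for weak `L^p` convergence of matrix fields. -/
def ConjTestM (p : ℝ) (Ω : Set V3) (g : V3 → M3) : Prop :=
  (∀ i k : Fin 3, AEStronglyMeasurable (fun x => g x i k) (volume.restrict Ω)) ∧
    ((p = 1 ∧ ∃ Cb : ℝ, ∀ᵐ x ∂volume.restrict Ω, frob (g x) ≤ Cb) ∨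
      (1 < p ∧ IntegrableOn (fun x => frob (g x) ^ (p / (p - 1))) Ω))

/-- Weak convergence `Fₖ ⇀ F` in `L^p(Ω;ℝ^{3×3})`. -/
def WeakLpM (p : ℝ) (Ω : Set V3) (Fk : ℕ → V3 → M3) (F : V3 → M3) : Prop :=
  ∀ g : V3 → M3, ConjTestM p Ω g →
    Tendsto (fun k => ∫ x in Ω, ∑ i, ∑ l, Fk k x i l * g x i l) atTop
      (nhds (∫ x in Ω, ∑ i, ∑ l, F x i l * g x i l))

/-- `φ` is a `C¹` function compactly supported inside the open set `U`. -/
def C1c (U : Set V3) (φ : V3 → V3) : Prop :=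
  ContDiff ℝ 1 φ ∧ HasCompactSupport φ ∧ tsupport φ ⊆ U

/-- The planar total variation `∫_U |∇_{m^⊥} s|`, defined by duality relative to an
orthonormal basis `(e₁, e₂)` of `m^⊥`. -/
def PTV (U : Set V3) (e₁ e₂ : V3) (s : V3 → V3) : ℝ≥0∞ :=
  ⨆ φ : {φ : (V3 → V3) × (V3 → V3) //
      C1c U φ.1 ∧ C1c U φ.2 ∧ ∀ x, ‖φ.1 x‖ ^ 2 + ‖φ.2 x‖ ^ 2 ≤ 1},
    ENNReal.ofReal
      (∫ x in U, (⟪s x, fderiv ℝ (φ : (V3 → V3) × (V3 → V3)).1 x e₁⟫ +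
        ⟪s x, fderiv ℝ (φ : (V3 → V3) × (V3 → V3)).2 x e₂⟫))

/-- `(e₁, e₂)` is an orthonormal basis of the plane `m^⊥`. -/
def ONBperp (m e₁ e₂ : V3) : Prop :=
  ‖e₁‖ = 1 ∧ ‖e₂‖ = 1 ∧ ⟪e₁, e₂⟫ = 0 ∧ ⟪e₁, m⟫ = 0 ∧ ⟪e₂, m⟫ = 0

/-- `G` is the weak (distributional) gradient of `y` on `Ω`. -/
def IsWeakGradient (Ω : Set V3) (y : V3 → V3) (G : V3 → M3) : Prop :=
  ∀ φ : V3 → ℝ, ContDiff ℝ (⊤ : ℕ∞) φ → HasCompactSupport φ → tsupport φ ⊆ Ω →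
    ∀ i k : Fin 3,
      ∫ x in Ω, y x i * fderiv ℝ φ x (EuclideanSpace.single k (1 : ℝ)) =
        - ∫ x in Ω, G x i k * φ x



/-- Interval `(α, α + r]`, with the restricted Lebesgue measure. -/
abbrev cellM (α r : ℝ) : Measure ℝ := volume.restrict (Set.Ioc α (α + r))

lemma cellM_univ (α r : ℝ) : cellM α r Set.univ = ENNReal.ofReal r := by
  simp [cellM]

lemma ftc_bound {u u' : ℝ → ℝ} (h : ∀ t, HasDerivAt u (u' t) t) (hc : Continuous u')
    {α r a a' : ℝ} (ha : a ∈ Set.Ioc α (α + r)) (ha' : a' ∈ Set.Ioc α (α + r)) :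
    ‖u a' - u a‖ₑ ≤ ∫⁻ t, ‖u' t‖ₑ ∂(cellM α r) := by
  have h1 : ∫ t in a..a', u' t = u a' - u a :=
    intervalIntegral.integral_eq_sub_of_hasDerivAt (fun t _ => h t) (hc.intervalIntegrable _ _)
  rw [← h1]
  have h2 : ‖∫ t in a..a', u' t‖ₑ = ‖∫ t in Set.uIoc a a', u' t‖ₑ := by
    rw [← ofReal_norm, ← ofReal_norm, intervalIntegral.norm_intervalIntegral_eq]
  rw [h2]
  refine (enorm_integral_le_lintegral_enorm _).trans ?_
  apply lintegral_mono_set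
  intro t ht
  rw [Set.mem_uIoc] at ht
  rcases ht with ht | ht
  · exact ⟨ha.1.trans ht.1, ht.2.trans ha'.2⟩
  · exact ⟨ha'.1.trans ht.1, ht.2.trans ha.2⟩

lemma slice_bound {u ua uc : ℝ → ℝ → ℝ}
    (ha : ∀ t s, HasDerivAt (fun t => u t s) (ua t s) t)
    (hc : ∀ t s, HasDerivAt (fun s => u t s) (uc t s) s)
    (hua : Continuous (Function.uncurry ua)) (huc : Continuous (Function.uncurry uc))
    (α γ r : ℝ) {a : ℝ} (haI : a ∈ Set.Ioc α (α + r)) :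
    ∫⁻ c, ∫⁻ y, ‖u y.1 y.2 - u a c‖ₑ ∂((cellM α r).prod (cellM γ r)) ∂(cellM γ r) ≤
      ENNReal.ofReal r ^ 2 *
        ∫⁻ y, (‖ua y.1 y.2‖ₑ + ‖uc y.1 y.2‖ₑ) ∂((cellM α r).prod (cellM γ r)) := by
  set I := cellM α r
  set J := cellM γ r
  have hua' : Measurable (fun y : ℝ × ℝ => ‖ua y.1 y.2‖ₑ) := (hua.enorm).measurable
  have huc' : Measurable (fun y : ℝ × ℝ => ‖uc y.1 y.2‖ₑ) := (huc.enorm).measurable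
  set P : ℝ → ℝ≥0∞ := fun a' => ∫⁻ s, ‖uc a' s‖ₑ ∂J
  set R : ℝ → ℝ≥0∞ := fun c => ∫⁻ t, ‖ua t c‖ₑ ∂I
  have hP : Measurable P := huc'.lintegral_prod_right'
  have hR : Measurable R := hua'.lintegral_prod_left'
  have hmemI : ∀ᵐ t ∂I, t ∈ Set.Ioc α (α + r) := ae_restrict_mem measurableSet_Ioc
  have hmemJ : ∀ᵐ t ∂J, t ∈ Set.Ioc γ (γ + r) := ae_restrict_mem measurableSet_Ioc
  have hI : I Set.univ = ENNReal.ofReal r := cellM_univ _ _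
  have hJ : J Set.univ = ENNReal.ofReal r := cellM_univ _ _
  have key : ∀ᵐ c ∂J, ∀ᵐ y ∂(I.prod J), ‖u y.1 y.2 - u a c‖ₑ ≤ P y.1 + R c := by
    filter_upwards [hmemJ] with c hcJ
    filter_upwards [Measure.quasiMeasurePreserving_fst.ae hmemI,
      Measure.quasiMeasurePreserving_snd.ae hmemJ] with y h1 h2
    have e1 : ‖u y.1 y.2 - u y.1 c‖ₑ ≤ P y.1 :=
      ftc_bound (u := fun s => u y.1 s) (hc y.1)
        (huc.comp (Continuous.prodMk continuous_const continuous_id)) hcJ h2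
    have e2 : ‖u y.1 c - u a c‖ₑ ≤ R c :=
      ftc_bound (u := fun t => u t c) (fun t => ha t c)
        (hua.comp (Continuous.prodMk continuous_id continuous_const)) haI h1
    calc ‖u y.1 y.2 - u a c‖ₑ = ‖(u y.1 y.2 - u y.1 c) + (u y.1 c - u a c)‖ₑ := by congr 1; ring
      _ ≤ _ := (enorm_add_le _ _).trans (add_le_add e1 e2)
  calc _ ≤ ∫⁻ c, ∫⁻ y, (P y.1 + R c) ∂(I.prod J) ∂J :=
        lintegral_mono_ae (key.mono fun c h => lintegral_mono_ae h)
    _ = ∫⁻ c, (ENNReal.ofReal r * (∫⁻ a, P a ∂I) + ENNReal.ofReal r ^ 2 * R c) ∂J := by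
        congr 1; ext c
        rw [lintegral_add_right _ measurable_const, lintegral_const,
          lintegral_prod _ (by fun_prop)]
        simp only [lintegral_const, hJ]
        rw [lintegral_mul_const _ hP, ← Set.univ_prod_univ, Measure.prod_prod, hI, hJ]
        ring
    _ = ENNReal.ofReal r ^ 2 * (∫⁻ a, P a ∂I) + ENNReal.ofReal r ^ 2 * ∫⁻ c, R c ∂J := by
        rw [lintegral_add_left measurable_const, lintegral_const, hJ, lintegral_const_mul _ hR]
        ring
    _ = _ := by
        rw [lintegral_add_left hua', lintegral_prod_symm _ hua'.aemeasurable,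
          lintegral_prod _ huc'.aemeasurable]
        ring

/-- Coordinate space. -/
abbrev E3 : Type := ℝ × ℝ × ℝ

/-- Restricted Lebesgue measure on a half-open box. -/
abbrev boxM (α β γ r : ℝ) : Measure E3 :=
  (cellM α r).prod ((cellM β r).prod (cellM γ r))

/-- Variation of a `C¹` function in the first and third coordinate directions. -/
def varBox (f : E3 → ℝ) (α β γ r : ℝ) : ℝ≥0∞ :=
  ∫⁻ x, (‖fderiv ℝ f x (1, 0, 0)‖ₑ + ‖fderiv ℝ f x (0, 0, 1)‖ₑ) ∂(boxM α β γ r)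

/-- Weighted oscillation. -/
def oscBox (f : E3 → ℝ) (w : ℝ → ℝ≥0∞) (α β γ r : ℝ) : ℝ≥0∞ :=
  ∫⁻ x, w x.1 * ∫⁻ y, ‖f (y.1, x.2.1, y.2) - f x‖ₑ ∂((cellM α r).prod (cellM γ r))
    ∂(boxM α β γ r)

lemma lintegral_mid (μ ν τ : Measure ℝ) [SFinite μ] [SFinite ν] [SFinite τ] {h : E3 → ℝ≥0∞}
    (hhm : Measurable h) :
    ∫⁻ x, h x ∂(μ.prod (ν.prod τ)) = ∫⁻ b, ∫⁻ y, h (y.1, b, y.2) ∂(μ.prod τ) ∂ν := by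
  rw [lintegral_prod _ hhm.aemeasurable]
  have : ∀ a, ∫⁻ y, h (a, y) ∂(ν.prod τ) = ∫⁻ b, ∫⁻ c, h (a, b, c) ∂τ ∂ν := fun a =>
    lintegral_prod _ (by fun_prop)
  simp_rw [this]
  rw [lintegral_lintegral_swap]
  · refine lintegral_congr fun b => ?_
    rw [lintegral_prod _ (by fun_prop)]
  · have : Measurable (fun q : (ℝ × ℝ) × ℝ => h (q.1.1, q.1.2, q.2)) := by fun_prop
    exact (this.lintegral_prod_right').aemeasurable

lemma mp_sigma (μ ν τ : Measure ℝ) [SFinite μ] [SFinite ν] [SFinite τ] :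
    MeasurePreserving (fun x : E3 => ((x.2.1, x.1, x.2.2) : E3))
      (ν.prod (μ.prod τ)) (μ.prod (ν.prod τ)) := by
  have a1 := (measurePreserving_prodAssoc ν μ τ).symm
  have a2 : MeasurePreserving (Prod.map Prod.swap id) ((ν.prod μ).prod τ) ((μ.prod ν).prod τ) :=
    (Measure.measurePreserving_swap (μ := ν) (ν := μ)).prod (MeasurePreserving.id τ)
  have a3 := measurePreserving_prodAssoc μ ν τ
  exact a3.comp (a2.comp a1)

lemma box_smooth {f : E3 → ℝ} (hf : ContDiff ℝ 1 f) {w : ℝ → ℝ≥0∞} (hw : Measurable w)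
    (α β γ r : ℝ) :
    oscBox f w α β γ r ≤
      ENNReal.ofReal r ^ 2 * varBox f α β γ r * ∫⁻ a, w a ∂(cellM α r) := by
  unfold oscBox varBox
  have hfm : Measurable f := hf.continuous.measurable
  have hd : Continuous (fderiv ℝ f) := hf.continuous_fderiv one_ne_zero
  have hda : Continuous (fun x => fderiv ℝ f x (1, 0, 0)) := hd.clm_apply continuous_const
  have hdc : Continuous (fun x => fderiv ℝ f x (0, 0, 1)) := hd.clm_apply continuous_const
  set h : E3 → ℝ≥0∞ := fun x => ‖fderiv ℝ f x (1, 0, 0)‖ₑ + ‖fderiv ℝ f x (0, 0, 1)‖ₑ with hh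
  have hhm : Measurable h := (hda.enorm.add hdc.enorm).measurable
  have hmemI : ∀ᵐ t ∂(cellM α r), t ∈ Set.Ioc α (α + r) := ae_restrict_mem measurableSet_Ioc
  have hdiff : ∀ x, HasFDerivAt f (fderiv ℝ f x) x :=
    fun x => (hf.differentiable one_ne_zero x).hasFDerivAt
  have hΦ : Measurable (fun q : E3 × (ℝ × ℝ) => ‖f (q.2.1, q.1.2.1, q.2.2) - f q.1‖ₑ) := by
    fun_prop
  have hF : Measurable (fun x : E3 =>
      ∫⁻ y, ‖f (y.1, x.2.1, y.2) - f x‖ₑ ∂((cellM α r).prod (cellM γ r))) :=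
    hΦ.lintegral_prod_right'
  have hV : ∫⁻ x, h x ∂(boxM α β γ r) =
      ∫⁻ b, ∫⁻ y, h (y.1, b, y.2) ∂((cellM α r).prod (cellM γ r)) ∂(cellM β r) :=
    lintegral_mid _ _ _ hhm
  rw [lintegral_prod _ (by fun_prop)]
  rw [← lintegral_const_mul _ hw]
  refine lintegral_mono_ae ?_
  filter_upwards [hmemI] with a ha
  have hFa : Measurable (fun q : ℝ × ℝ =>
      ∫⁻ y, ‖f (y.1, q.1, y.2) - f (a, q)‖ₑ ∂((cellM α r).prod (cellM γ r))) :=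
    hF.comp measurable_prodMk_left
  rw [lintegral_const_mul _ hFa, mul_comm]
  gcongr
  rw [lintegral_prod _ (by fun_prop), hV, ← lintegral_const_mul]
  · refine lintegral_mono fun b => ?_
    refine slice_bound (u := fun t s => f (t, b, s)) (ua := fun t s => fderiv ℝ f (t, b, s) (1, 0, 0))
      (uc := fun t s => fderiv ℝ f (t, b, s) (0, 0, 1)) ?_ ?_ ?_ ?_ α γ r ha
    · intro t s
      have : HasDerivAt (fun t : ℝ => ((t, b, s) : E3)) (1, 0, 0) t :=
        (hasDerivAt_id t).prodMk ((hasDerivAt_const t b).prodMk (hasDerivAt_const t s))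
      exact (hdiff (t, b, s)).comp_hasDerivAt t this
    · intro t s
      have : HasDerivAt (fun s : ℝ => ((t, b, s) : E3)) (0, 0, 1) s :=
        (hasDerivAt_const s t).prodMk ((hasDerivAt_const s b).prodMk (hasDerivAt_id s))
      exact (hdiff (t, b, s)).comp_hasDerivAt s this
    · exact hda.comp (f := fun q : ℝ × ℝ => ((q.1, b, q.2) : E3)) (by fun_prop)
    · exact hdc.comp (f := fun q : ℝ × ℝ => ((q.1, b, q.2) : E3)) (by fun_prop)
  · have : Measurable (fun q : ℝ × (ℝ × ℝ) => h (q.2.1, q.1, q.2.2)) := by fun_prop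
    exact this.lintegral_prod_right'

lemma qmp_mix (μ ν τ : Measure ℝ) [SFinite μ] [SFinite ν] [SFinite τ] :
    Measure.QuasiMeasurePreserving (fun q : E3 × (ℝ × ℝ) => ((q.2.1, q.1.2.1, q.2.2) : E3))
      ((μ.prod (ν.prod τ)).prod (μ.prod τ)) (μ.prod (ν.prod τ)) := by
  have h1 : Measure.QuasiMeasurePreserving (fun q : E3 × (ℝ × ℝ) => ((q.1.2.1, q.2) : E3))
      ((μ.prod (ν.prod τ)).prod (μ.prod τ)) (ν.prod (μ.prod τ)) := by
    have h0 : Measure.QuasiMeasurePreserving (fun x : E3 => x.2.1) (μ.prod (ν.prod τ)) ν :=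
      Measure.quasiMeasurePreserving_fst.comp Measure.quasiMeasurePreserving_snd
    exact MeasureTheory.QuasiMeasurePreserving.prodMap h0 (Measure.QuasiMeasurePreserving.id _)
  exact (mp_sigma μ ν τ).quasiMeasurePreserving.comp h1

lemma box_fatou {f : E3 → ℝ} (hfm : Measurable f) {fn : ℕ → E3 → ℝ}
    (hfn : ∀ n, ContDiff ℝ 1 (fn n)) {w : ℝ → ℝ≥0∞} (hw : Measurable w)
    (α β γ r : ℝ) (hwt : (∫⁻ a, w a ∂(cellM α r)) ≠ ⊤)
    (hlim : ∀ᵐ x ∂(boxM α β γ r), Tendsto (fun n => fn n x) atTop (𝓝 (f x))) :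
    oscBox f w α β γ r ≤
      ENNReal.ofReal r ^ 2 * (liminf (fun n => varBox (fn n) α β γ r) atTop)
        * ∫⁻ a, w a ∂(cellM α r) := by
  have hosc : ∀ g : E3 → ℝ, Measurable g → oscBox g w α β γ r =
      ∫⁻ q, w q.1.1 * ‖g (q.2.1, q.1.2.1, q.2.2) - g q.1‖ₑ
        ∂((boxM α β γ r).prod ((cellM α r).prod (cellM γ r))) := by
    intro g hg
    rw [lintegral_prod _ (by fun_prop)]
    refine lintegral_congr fun x => ?_
    exact (lintegral_const_mul _ (by fun_prop)).symm
  have hfnm : ∀ n, Measurable (fn n) := fun n => (hfn n).continuous.measurable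
  rw [hosc f hfm]
  have hae : ∀ᵐ q ∂((boxM α β γ r).prod ((cellM α r).prod (cellM γ r))),
      w q.1.1 * ‖f (q.2.1, q.1.2.1, q.2.2) - f q.1‖ₑ ≤
      liminf (fun n => w q.1.1 * ‖fn n (q.2.1, q.1.2.1, q.2.2) - fn n q.1‖ₑ) atTop := by
    filter_upwards [Measure.quasiMeasurePreserving_fst.ae hlim,
      (qmp_mix (cellM α r) (cellM β r) (cellM γ r)).ae hlim] with q h1 h2
    by_cases h0 : ‖f (q.2.1, q.1.2.1, q.2.2) - f q.1‖ₑ = 0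
    · rw [h0]; simp
    · exact (ENNReal.Tendsto.const_mul ((h2.sub h1).enorm) (Or.inl h0)).liminf_eq.ge
  refine (lintegral_mono_ae hae).trans ?_
  refine (lintegral_liminf_le (fun n => ?_)).trans ?_
  · have := hfnm n
    fun_prop
  simp_rw [← fun n => hosc (fn n) (hfnm n)]
  refine (liminf_le_liminf (Eventually.of_forall fun n => box_smooth (hfn n) hw α β γ r)).trans ?_
  rw [ENNReal.liminf_mul_const_of_ne_top hwt, ENNReal.liminf_const_mul_of_ne_top (by finiteness),
    mul_comm]

lemma box_min {f g : E3 → ℝ} (hfm : Measurable f) (hgm : Measurable g) {α β γ r : ℝ} (hr : 0 < r)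
    (hdisj : ∀ᵐ x ∂(boxM α β γ r), f x * g (x.2.1, x.1, x.2.2) = 0) {Wf Wg : ℝ≥0∞}
    (hf : ∀ w : ℝ → ℝ≥0∞, Measurable w → (∫⁻ a, w a ∂(cellM α r)) ≠ ⊤ →
      oscBox f w α β γ r ≤ ENNReal.ofReal r ^ 2 * Wf * ∫⁻ a, w a ∂(cellM α r))
    (hg : ∀ w : ℝ → ℝ≥0∞, Measurable w → (∫⁻ a, w a ∂(cellM β r)) ≠ ⊤ →
      oscBox g w β α γ r ≤ ENNReal.ofReal r ^ 2 * Wg * ∫⁻ a, w a ∂(cellM β r))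
    (hX : ∫⁻ x, ‖f x‖ₑ ∂(boxM α β γ r) ≠ ⊤) (hY : ∫⁻ x, ‖g x‖ₑ ∂(boxM β α γ r) ≠ ⊤) :
    min (∫⁻ x, ‖f x‖ₑ ∂(boxM α β γ r)) (∫⁻ x, ‖g x‖ₑ ∂(boxM β α γ r)) ≤
      ENNReal.ofReal r * (Wf + Wg) := by
  set X := ∫⁻ x, ‖f x‖ₑ ∂(boxM α β γ r) with hXd
  set Y := ∫⁻ x, ‖g x‖ₑ ∂(boxM β α γ r) with hYd
  set φ : ℝ → ℝ≥0∞ := fun b => ∫⁻ y, ‖f (y.1, b, y.2)‖ₑ ∂((cellM α r).prod (cellM γ r)) with hφ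
  set ψ : ℝ → ℝ≥0∞ := fun b => ∫⁻ y, ‖g (y.1, b, y.2)‖ₑ ∂((cellM β r).prod (cellM γ r)) with hψ
  have hφX : ∫⁻ b, φ b ∂(cellM β r) = X :=
    (lintegral_mid _ _ _ (h := fun x => ‖f x‖ₑ) (by fun_prop)).symm
  have hψY : ∫⁻ b, ψ b ∂(cellM α r) = Y :=
    (lintegral_mid _ _ _ (h := fun x => ‖g x‖ₑ) (by fun_prop)).symm
  have hφm : Measurable φ := by
    have : Measurable (fun q : ℝ × (ℝ × ℝ) => ‖f (q.2.1, q.1, q.2.2)‖ₑ) := by fun_prop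
    exact this.lintegral_prod_right'
  have hψm : Measurable ψ := by
    have : Measurable (fun q : ℝ × (ℝ × ℝ) => ‖g (q.2.1, q.1, q.2.2)‖ₑ) := by fun_prop
    exact this.lintegral_prod_right'
  set F : E3 → ℝ≥0∞ := fun x =>
    ∫⁻ y, ‖f (y.1, x.2.1, y.2) - f x‖ₑ ∂((cellM α r).prod (cellM γ r)) with hF
  set G : E3 → ℝ≥0∞ := fun x =>
    ∫⁻ y, ‖g (y.1, x.2.1, y.2) - g x‖ₑ ∂((cellM β r).prod (cellM γ r)) with hG
  have hFm : Measurable F := by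
    have : Measurable (fun q : E3 × (ℝ × ℝ) => ‖f (q.2.1, q.1.2.1, q.2.2) - f q.1‖ₑ) := by
      fun_prop
    exact this.lintegral_prod_right'
  have hGm : Measurable G := by
    have : Measurable (fun q : E3 × (ℝ × ℝ) => ‖g (q.2.1, q.1.2.1, q.2.2) - g q.1‖ₑ) := by
      fun_prop
    exact this.lintegral_prod_right'
  have hpt : ∀ᵐ x ∂(boxM α β γ r), ψ x.1 * φ x.2.1 ≤
      ψ x.1 * F x + φ x.2.1 * G (x.2.1, x.1, x.2.2) := by
    filter_upwards [hdisj] with x hx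
    rcases mul_eq_zero.1 hx with h | h
    · have : F x = φ x.2.1 := by simp [hF, hφ, h]
      rw [this]; exact le_self_add
    · have : G (x.2.1, x.1, x.2.2) = ψ x.1 := by simp [hG, hψ, h]
      rw [this, mul_comm (φ _)]; exact le_add_self
  have h1 : ∫⁻ x, ψ x.1 * φ x.2.1 ∂(boxM α β γ r) = ENNReal.ofReal r * (X * Y) := by
    rw [lintegral_prod _ (by fun_prop)]
    have : ∀ a, ∫⁻ y : ℝ × ℝ, ψ a * φ y.1 ∂((cellM β r).prod (cellM γ r)) =
        ψ a * (X * ENNReal.ofReal r) := by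
      intro a
      rw [lintegral_const_mul _ (by fun_prop), lintegral_prod _ (by fun_prop)]
      simp only [lintegral_const, cellM_univ]
      rw [lintegral_mul_const _ hφm, hφX]
    simp only [this]
    rw [lintegral_mul_const _ hψm, hψY]
    ring
  have h2 : ∫⁻ x, ψ x.1 * F x ∂(boxM α β γ r) ≤ ENNReal.ofReal r ^ 2 * Wf * Y := by
    have := hf ψ hψm (by rw [hψY]; exact hY)
    rwa [hψY] at this
  have h3 : ∫⁻ x, φ x.2.1 * G (x.2.1, x.1, x.2.2) ∂(boxM α β γ r) ≤
      ENNReal.ofReal r ^ 2 * Wg * X := by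
    have := hg φ hφm (by rw [hφX]; exact hX)
    rw [hφX] at this
    refine le_trans (le_of_eq ?_) this
    exact (mp_sigma (cellM β r) (cellM α r) (cellM γ r)).lintegral_comp
      (f := fun x => φ x.1 * G x) (by fun_prop)
  have h4 : ENNReal.ofReal r * (X * Y) ≤
      ENNReal.ofReal r * (ENNReal.ofReal r * (Wf * Y + Wg * X)) := by
    rw [← h1]
    refine (lintegral_mono_ae hpt).trans ?_
    rw [lintegral_add_left (by fun_prop)]
    refine (add_le_add h2 h3).trans (le_of_eq ?_)
    ring
  have hr0 : ENNReal.ofReal r ≠ 0 := by simpa using hr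
  rw [ENNReal.mul_le_mul_iff_right hr0 ENNReal.ofReal_ne_top] at h4
  rcases le_total X Y with hle | hle
  · rw [min_eq_left hle]
    by_cases hY0 : Y = 0
    · rw [hY0] at hle; exact hle.trans zero_le
    rw [← ENNReal.mul_le_mul_iff_left hY0 hY]
    refine h4.trans ?_
    rw [mul_assoc, add_mul]
    gcongr
  · rw [min_eq_right hle]
    by_cases hX0 : X = 0
    · rw [hX0] at hle; exact hle.trans zero_le
    rw [← ENNReal.mul_le_mul_iff_left hX0 hX, mul_comm Y]
    refine h4.trans ?_
    rw [mul_assoc, add_mul]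
    gcongr

instance instHaarRR : (volume : Measure (ℝ × ℝ)).IsAddHaarMeasure :=
  inferInstanceAs ((volume : Measure ℝ).prod (volume : Measure ℝ)).IsAddHaarMeasure

instance instHaarE3 : (volume : Measure E3).IsAddHaarMeasure :=
  inferInstanceAs ((volume : Measure ℝ).prod (volume : Measure (ℝ × ℝ))).IsAddHaarMeasure

/-- Dual bound on the distributional derivative of `f` in direction `v`. -/
def DualBound (Ω : Set E3) (f : E3 → ℝ) (v : E3) (K : ℝ) : Prop :=
  ∀ φ : E3 → ℝ, ContDiff ℝ 1 φ → HasCompactSupport φ → tsupport φ ⊆ Ω → (∀ x, |φ x| ≤ 1) →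
    ∫ x, f x * fderiv ℝ φ x v ≤ K

/-- Mollification. -/
def moll (ρ : ContDiffBump (0 : E3)) (h : E3 → ℝ) : E3 → ℝ :=
  convolution h (ρ.normed volume) (ContinuousLinearMap.lsmul ℝ ℝ) volume

lemma moll_apply (ρ : ContDiffBump (0 : E3)) (h : E3 → ℝ) (x : E3) :
    moll ρ h x = ∫ t, h t * ρ.normed volume (x - t) := by
  simp [moll, convolution_def]

lemma moll_contDiff (ρ : ContDiffBump (0 : E3)) {h : E3 → ℝ} (hh : LocallyIntegrable h) :
    ContDiff ℝ 1 (moll ρ h) :=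
  ρ.hasCompactSupport_normed.contDiff_convolution_right (n := 1) _ hh ρ.contDiff_normed

lemma moll_fderiv (ρ : ContDiffBump (0 : E3)) {h : E3 → ℝ} (hh : LocallyIntegrable h) (x v : E3) :
    fderiv ℝ (moll ρ h) x v = ∫ t, h t * fderiv ℝ (ρ.normed volume) (x - t) v := by
  have h1 : ContDiff ℝ 1 (ρ.normed (volume : Measure E3)) := ρ.contDiff_normed
  have := ρ.hasCompactSupport_normed.hasFDerivAt_convolution_right
    (ContinuousLinearMap.lsmul ℝ ℝ) hh h1 x
  unfold moll
  rw [this.fderiv, convolution_precompR_apply _ hh (ρ.hasCompactSupport_normed.fderiv ℝ)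
    (h1.continuous_fderiv one_ne_zero)]
  simp [convolution_def]

lemma moll_bound {Ω : Set E3} {f : E3 → ℝ} {v : E3} {K : ℝ} (hf : Integrable f)
    (hK : DualBound Ω f v K) {S : Set E3} (hS : IsCompact S) (ρ : ContDiffBump (0 : E3))
    (hρ : Metric.cthickening ρ.rOut S ⊆ Ω) :
    ∫⁻ x in S, ‖fderiv ℝ (moll ρ f) x v‖ₑ ≤ ENNReal.ofReal K := by
  set N := ρ.normed (volume : Measure E3) with hN
  have hNc : ContDiff ℝ 1 N := ρ.contDiff_normed
  have hNs : HasCompactSupport N := ρ.hasCompactSupport_normed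
  set D : E3 → ℝ := fun z => fderiv ℝ N z v with hD
  have hDc : Continuous D := (hNc.continuous_fderiv one_ne_zero).clm_apply continuous_const
  have hDs : HasCompactSupport D := hNs.fderiv_apply ℝ v
  have hDodd : ∀ z, D (-z) = - D z := by
    intro z
    have h1 : (fun y => N (-y)) = N := by ext y; exact ρ.normed_neg y
    have h4 : HasFDerivAt (fun y => N (-y)) ((fderiv ℝ N (-z)).comp
        (-(ContinuousLinearMap.id ℝ E3))) z :=
      ((hNc.differentiable one_ne_zero (-z)).hasFDerivAt).comp z (hasFDerivAt_id z).neg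
    rw [h1] at h4
    have h3 : fderiv ℝ N z = - fderiv ℝ N (-z) := by
      rw [h4.fderiv]; ext <;> simp
    simp only [hD]
    rw [h3]; simp
  obtain ⟨C, hC⟩ := hDc.bounded_above_of_compact_support hDs
  set G : E3 → ℝ := fun x => fderiv ℝ (moll ρ f) x v with hG
  have hGc : Continuous G :=
    ((moll_contDiff ρ hf.locallyIntegrable).continuous_fderiv one_ne_zero).clm_apply
      continuous_const
  have hGe : ∀ x, G x = ∫ t, f t * D (x - t) := fun x => moll_fderiv ρ hf.locallyIntegrable x v
  set ψ : E3 → ℝ := S.indicator (fun x => if 0 ≤ G x then -1 else 1) with hψ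
  have hψm : Measurable ψ :=
    (Measurable.ite (measurableSet_le measurable_const hGc.measurable)
      measurable_const measurable_const).indicator hS.measurableSet
  have hψ1 : ∀ x, |ψ x| ≤ 1 := by
    intro x
    by_cases hx : x ∈ S
    · simp only [hψ, Set.indicator_of_mem hx]; split_ifs <;> simp
    · simp [hψ, Set.indicator_of_notMem hx]
  have hψG : ∀ x, ψ x * G x = - S.indicator (fun x => ‖G x‖) x := by
    intro x
    by_cases hx : x ∈ S
    · simp only [hψ, Set.indicator_of_mem hx, Real.norm_eq_abs]
      split_ifs with h
      · rw [abs_of_nonneg h]; ring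
      · rw [abs_of_neg (not_le.1 h)]; ring
    · simp [hψ, Set.indicator_of_notMem hx]
  have hψi : Integrable ψ := by
    have : Integrable (S.indicator (fun _ => (1 : ℝ))) :=
      (integrable_indicator_iff hS.measurableSet).2 (integrableOn_const (hS.measure_lt_top.ne))
    refine this.mono' hψm.aestronglyMeasurable (Eventually.of_forall fun x => ?_)
    by_cases hx : x ∈ S
    · simpa [Set.indicator_of_mem hx] using hψ1 x
    · simp [hψ, Set.indicator_of_notMem hx]
  have hψl := hψi.locallyIntegrable
  have hsupp : Function.support (moll ρ ψ) ⊆ Metric.cthickening ρ.rOut S := by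
    refine (support_convolution_subset _).trans ?_
    rw [← hS.add_closedBall_zero ρ.rOut_pos.le]
    refine Set.add_subset_add (fun x hx => ?_) ?_
    · by_contra h
      exact hx (by simp [hψ, Set.indicator_of_notMem h])
    · rw [ρ.support_normed_eq]; exact Metric.ball_subset_closedBall
  have hct : IsCompact (Metric.cthickening ρ.rOut S) := hS.cthickening
  have hb : ∀ x, |moll ρ ψ x| ≤ 1 := by
    intro x
    rw [moll_apply, ← Real.norm_eq_abs]
    have hNi : Integrable (fun t => N (x - t)) :=
      (hNc.continuous.integrable_of_hasCompactSupport hNs).comp_sub_left x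
    refine (norm_integral_le_of_norm_le hNi (Eventually.of_forall fun t => ?_)).trans ?_
    · have hn : 0 ≤ N (x - t) := ρ.nonneg_normed _
      rw [norm_mul, Real.norm_of_nonneg hn, Real.norm_eq_abs]
      exact mul_le_of_le_one_left hn (hψ1 t)
    · rw [integral_sub_left_eq_self (fun t => N t) volume x]
      exact ρ.integral_normed.le
  have main := hK (moll ρ ψ) (moll_contDiff ρ hψl) (HasCompactSupport.of_support_subset_isCompact hct hsupp)
    ((closure_minimal hsupp hct.isClosed).trans hρ) hb
  have hIntg : Integrable (fun q : E3 × E3 => f q.1 * (ψ q.2 * D (q.1 - q.2))) (volume.prod volume) := by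
    have h1 : Integrable (fun q : E3 × E3 => f q.1 * ψ q.2) (volume.prod volume) := hf.mul_prod hψi
    have h2 := h1.mul_bdd (c := C) (g := fun q : E3 × E3 => D (q.1 - q.2))
      (hDc.comp (continuous_fst.sub continuous_snd)).aestronglyMeasurable
      (Eventually.of_forall fun q => hC _)
    refine h2.congr (Eventually.of_forall fun q => ?_)
    simp only
    ring
  have e1 : ∫ x, f x * fderiv ℝ (moll ρ ψ) x v = ∫ x, S.indicator (fun x => ‖G x‖) x := by
    have : ∀ x, f x * fderiv ℝ (moll ρ ψ) x v = ∫ t, f x * (ψ t * D (x - t)) := by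
      intro x
      rw [moll_fderiv ρ hψl, integral_const_mul]
    simp_rw [this]
    rw [integral_integral_swap hIntg]
    refine integral_congr_ae (Eventually.of_forall fun t => ?_)
    simp only
    have h2 := hψG t
    have h3 : S.indicator (fun x => ‖G x‖) t = - (ψ t * G t) := by rw [h2]; ring
    rw [h3, hGe, ← integral_const_mul, ← integral_neg]
    refine integral_congr_ae (Eventually.of_forall fun y => ?_)
    simp only
    have : D (y - t) = - D (t - y) := by rw [← hDodd]; congr 1; abel
    rw [this]; ring
  rw [e1, integral_indicator hS.measurableSet] at main
  have hGi : IntegrableOn G S := hGc.continuousOn.integrableOn_compact hS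
  rw [← ofReal_integral_norm_eq_lintegral_enorm hGi]
  exact ENNReal.ofReal_le_ofReal main

/-- Half-open grid cube. -/
def gridQ (r : ℝ) (z : ℤ × ℤ × ℤ) : Set E3 :=
  Set.Ioc (z.1 * r) (z.1 * r + r) ×ˢ
    (Set.Ioc (z.2.1 * r) (z.2.1 * r + r) ×ˢ Set.Ioc (z.2.2 * r) (z.2.2 * r + r))

/-- Closed grid cube. -/
def gridC (r : ℝ) (z : ℤ × ℤ × ℤ) : Set E3 :=
  Set.Icc (z.1 * r) (z.1 * r + r) ×ˢ
    (Set.Icc (z.2.1 * r) (z.2.1 * r + r) ×ˢ Set.Icc (z.2.2 * r) (z.2.2 * r + r))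

lemma gridC_compact (r : ℝ) (z : ℤ × ℤ × ℤ) : IsCompact (gridC r z) :=
  isCompact_Icc.prod (isCompact_Icc.prod isCompact_Icc)

lemma gridQ_meas (r : ℝ) (z : ℤ × ℤ × ℤ) : MeasurableSet (gridQ r z) :=
  measurableSet_Ioc.prod (measurableSet_Ioc.prod measurableSet_Ioc)

lemma gridQ_subset (r : ℝ) (z : ℤ × ℤ × ℤ) : gridQ r z ⊆ gridC r z :=
  Set.prod_mono Set.Ioc_subset_Icc_self (Set.prod_mono Set.Ioc_subset_Icc_self
    Set.Ioc_subset_Icc_self)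

lemma boxM_grid (r : ℝ) (z : ℤ × ℤ × ℤ) :
    boxM (z.1 * r) (z.2.1 * r) (z.2.2 * r) r = volume.restrict (gridQ r z) := by
  unfold boxM cellM gridQ
  rw [Measure.prod_restrict, Measure.prod_restrict]
  rfl

/-- Index of the grid interval. -/
def idx1 (r x : ℝ) : ℤ := ⌈x / r⌉ - 1

lemma idx1_iff {r : ℝ} (hr : 0 < r) (n : ℤ) (x : ℝ) :
    x ∈ Set.Ioc (n * r) (n * r + r) ↔ n = idx1 r x := by
  unfold idx1
  rw [eq_sub_iff_add_eq, eq_comm, Int.ceil_eq_iff, lt_div_iff₀ hr, div_le_iff₀ hr, Set.mem_Ioc]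
  push_cast
  constructor
  · rintro ⟨h1, h2⟩; constructor <;> linarith
  · rintro ⟨h1, h2⟩; constructor <;> linarith

/-- Index of the grid cube. -/
def idx (r : ℝ) (x : E3) : ℤ × ℤ × ℤ := (idx1 r x.1, idx1 r x.2.1, idx1 r x.2.2)

lemma idx_iff {r : ℝ} (hr : 0 < r) (z : ℤ × ℤ × ℤ) (x : E3) : x ∈ gridQ r z ↔ z = idx r x := by
  obtain ⟨z1, z2, z3⟩ := z
  simp only [gridQ, Set.mem_prod, idx1_iff hr, idx, Prod.mk.injEq]

lemma gridQ_disj {r : ℝ} (hr : 0 < r) : Pairwise (Function.onFun Disjoint (gridQ r)) := by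
  intro z z' hne
  rw [Function.onFun, Set.disjoint_left]
  intro x h1 h2
  rw [idx_iff hr] at h1 h2
  exact hne (h1.trans h2.symm)

lemma sum_liminf_le {ι : Type*} (Z : Finset ι) (u : ℕ → ι → ℝ≥0∞) :
    ∑ z ∈ Z, liminf (fun n => u n z) atTop ≤ liminf (fun n => ∑ z ∈ Z, u n z) atTop := by
  let _ : MeasurableSpace Z := ⊤
  have h := lintegral_liminf_le (μ := (Measure.count : Measure Z)) (u := atTop)
    (f := fun n (z : Z) => u n z) (fun n => measurable_from_top)
  simp only [lintegral_count, tsum_fintype] at h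
  rw [← Finset.sum_coe_sort]
  simp_rw [← Finset.sum_coe_sort Z]
  exact h

lemma grid_bound {Ω : Set E3} (hΩ : IsOpen Ω) {f : E3 → ℝ} (hf : Integrable f) (hfm : Measurable f)
    {K : ℝ} (hKa : DualBound Ω f (1, 0, 0) K) (hKc : DualBound Ω f (0, 0, 1) K)
    {r : ℝ} (hr : 0 < r) (Z : Finset (ℤ × ℤ × ℤ)) (hZ : ∀ z ∈ Z, gridC r z ⊆ Ω) :
    ∃ W : ℤ × ℤ × ℤ → ℝ≥0∞, ∑ z ∈ Z, W z ≤ 2 * ENNReal.ofReal K ∧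
      ∀ z ∈ Z, ∀ w : ℝ → ℝ≥0∞, Measurable w → (∫⁻ a, w a ∂(cellM (z.1 * r) r)) ≠ ⊤ →
        oscBox f w (z.1 * r) (z.2.1 * r) (z.2.2 * r) r ≤
          ENNReal.ofReal r ^ 2 * W z * ∫⁻ a, w a ∂(cellM (z.1 * r) r) := by
  let ρ : ℕ → ContDiffBump (0 : E3) := fun n =>
    { rIn := 1 / (n + 1 : ℝ), rOut := 2 * (1 / (n + 1 : ℝ)), rIn_pos := by positivity,
      rIn_lt_rOut := by
        have : 0 < 1 / (n + 1 : ℝ) := by positivity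
        linarith }
  have hρ : Tendsto (fun n => (ρ n).rOut) atTop (𝓝 0) := by
    have := (tendsto_one_div_add_atTop_nhds_zero_nat (𝕜 := ℝ)).const_mul 2
    simpa [ρ] using this
  have hlim : ∀ᵐ x : E3, Tendsto (fun n => moll (ρ n) f x) atTop (𝓝 (f x)) := by
    have := ContDiffBump.ae_convolution_tendsto_right_of_locallyIntegrable (μ := volume) (K := 2)
      hρ (Eventually.of_forall fun n => le_rfl) hf.locallyIntegrable
    filter_upwards [this] with x hx
    refine hx.congr fun n => ?_
    rw [convolution_lsmul_swap, moll_apply]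
    simp [mul_comm]
  refine ⟨fun z => liminf (fun n => varBox (moll (ρ n) f) (z.1 * r) (z.2.1 * r) (z.2.2 * r) r) atTop,
    ?_, ?_⟩
  · refine (sum_liminf_le Z _).trans ?_
    have hS : IsCompact (⋃ z ∈ Z, gridC r z) := Z.isCompact_biUnion fun z _ => gridC_compact r z
    have hSΩ : (⋃ z ∈ Z, gridC r z) ⊆ Ω := Set.iUnion₂_subset hZ
    obtain ⟨δ, hδ, hδΩ⟩ := hS.exists_cthickening_subset_open hΩ hSΩ
    refine liminf_le_of_frequently_le' (Eventually.frequently ?_)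
    filter_upwards [hρ.eventually (ge_mem_nhds hδ)] with n hn
    have hsub := (Metric.cthickening_mono hn _).trans hδΩ
    unfold varBox
    simp_rw [boxM_grid]
    rw [← lintegral_biUnion_finset (fun z _ z' _ h => gridQ_disj hr h)
      (fun z _ => gridQ_meas r z)]
    refine (lintegral_mono_set (Set.iUnion₂_mono fun z _ => gridQ_subset r z)).trans ?_
    have hd : Continuous (fderiv ℝ (moll (ρ n) f)) :=
      (moll_contDiff (ρ n) hf.locallyIntegrable).continuous_fderiv one_ne_zero
    rw [lintegral_add_left (hd.clm_apply continuous_const).enorm.measurable, two_mul]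
    exact add_le_add (moll_bound hf hKa hS _ hsub) (moll_bound hf hKc hS _ hsub)
  · intro z _ w hw hwt
    refine box_fatou hfm (fun n => moll_contDiff (ρ n) hf.locallyIntegrable) hw _ _ _ _ hwt ?_
    rw [boxM_grid]
    exact ae_restrict_of_ae hlim

/-- Swap of the first two indices. -/
def zsw (z : ℤ × ℤ × ℤ) : ℤ × ℤ × ℤ := (z.2.1, z.1, z.2.2)

/-- Swap of the first two coordinates. -/
def esw (x : E3) : E3 := (x.2.1, x.1, x.2.2)

lemma grid_min {Ω : Set E3} (hΩ : IsOpen Ω) {f g : E3 → ℝ} (hf : Integrable f) (hfm : Measurable f)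
    (hg : Integrable g) (hgm : Measurable g)
    {K : ℝ} (hKa : DualBound Ω f (1, 0, 0) K) (hKc : DualBound Ω f (0, 0, 1) K)
    (hKb : DualBound (esw ⁻¹' Ω) g (1, 0, 0) K) (hKd : DualBound (esw ⁻¹' Ω) g (0, 0, 1) K)
    (hdisj : ∀ᵐ x, f x * g (esw x) = 0)
    {r : ℝ} (hr : 0 < r) (Z : Finset (ℤ × ℤ × ℤ)) (hZ : ∀ z ∈ Z, gridC r z ⊆ Ω) :
    ∑ z ∈ Z, min (∫⁻ x in gridQ r z, ‖f x‖ₑ) (∫⁻ x in gridQ r (zsw z), ‖g x‖ₑ) ≤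
      ENNReal.ofReal r * (4 * ENNReal.ofReal K) := by
  obtain ⟨Wf, hWf, hf2⟩ := grid_bound hΩ hf hfm hKa hKc hr Z hZ
  have hinj : Function.Injective zsw := by
    rintro ⟨a, b, c⟩ ⟨a', b', c'⟩ h
    simp only [zsw, Prod.mk.injEq] at h ⊢
    tauto
  have hΩ' : IsOpen (esw ⁻¹' Ω) := hΩ.preimage (by unfold esw; fun_prop)
  obtain ⟨Wg, hWg, hg2⟩ := grid_bound hΩ' hg hgm hKb hKd hr (Z.map ⟨zsw, hinj⟩) (by
    intro z hz
    rw [Finset.mem_map] at hz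
    obtain ⟨z', hz', rfl⟩ := hz
    intro x hx
    refine hZ z' hz' ?_
    exact ⟨hx.2.1, hx.1, hx.2.2⟩)
  rw [Finset.sum_map] at hWg
  calc _ ≤ ∑ z ∈ Z, ENNReal.ofReal r * (Wf z + Wg (zsw z)) := by
        refine Finset.sum_le_sum fun z hz => ?_
        have hXf : ∫⁻ x, ‖f x‖ₑ ∂(boxM (z.1 * r) (z.2.1 * r) (z.2.2 * r) r) ≠ ⊤ := by
          rw [boxM_grid]; exact hf.integrableOn.2.ne
        have hbz : boxM (z.2.1 * r) (z.1 * r) (z.2.2 * r) r =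
          volume.restrict (gridQ r (zsw z)) := boxM_grid r (zsw z)
        have hYf : ∫⁻ x, ‖g x‖ₑ ∂(boxM (z.2.1 * r) (z.1 * r) (z.2.2 * r) r) ≠ ⊤ := by
          rw [hbz]; exact hg.integrableOn.2.ne
        have := box_min hfm hgm (α := z.1 * r) (β := z.2.1 * r) (γ := z.2.2 * r) hr
          (by rw [boxM_grid]; exact ae_restrict_of_ae hdisj) (hf2 z hz)
          (hg2 (zsw z) (Finset.mem_map_of_mem _ hz)) hXf hYf
        rw [boxM_grid r z, hbz] at this
        exact this
    _ ≤ _ := by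
        rw [← Finset.mul_sum, Finset.sum_add_distrib]
        gcongr
        refine (add_le_add hWf hWg).trans (le_of_eq ?_)
        ring

lemma esw_mp : MeasurePreserving esw (volume : Measure E3) volume :=
  mp_sigma volume volume volume

lemma DualBound.congr {Ω : Set E3} {f f' : E3 → ℝ} {v : E3} {K : ℝ} (h : DualBound Ω f v K)
    (hff : f =ᵐ[volume] f') : DualBound Ω f' v K := by
  intro φ h1 h2 h3 h4
  refine le_trans (le_of_eq ?_) (h φ h1 h2 h3 h4)
  refine integral_congr_ae ?_
  filter_upwards [hff] with x hx
  rw [hx]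

lemma grid_min2 {Ω : Set E3} (hΩ : IsOpen Ω) {f g : E3 → ℝ} (hf : Integrable f)
    (hg : Integrable g)
    {K : ℝ} (hKa : DualBound Ω f (1, 0, 0) K) (hKc : DualBound Ω f (0, 0, 1) K)
    (hKb : DualBound (esw ⁻¹' Ω) g (1, 0, 0) K) (hKd : DualBound (esw ⁻¹' Ω) g (0, 0, 1) K)
    (hdisj : ∀ᵐ x, f x * g (esw x) = 0)
    {r : ℝ} (hr : 0 < r) (Z : Finset (ℤ × ℤ × ℤ)) (hZ : ∀ z ∈ Z, gridC r z ⊆ Ω) :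
    ∑ z ∈ Z, min ‖∫ x in gridQ r z, f x‖ₑ ‖∫ x in gridQ r (zsw z), g x‖ₑ ≤
      ENNReal.ofReal r * (4 * ENNReal.ofReal K) := by
  have e1 := hf.1.ae_eq_mk
  have e2 := hg.1.ae_eq_mk
  have := grid_min hΩ (hf.congr e1) hf.1.stronglyMeasurable_mk.measurable (hg.congr e2)
    hg.1.stronglyMeasurable_mk.measurable (hKa.congr e1) (hKc.congr e1) (hKb.congr e2)
    (hKd.congr e2) (by
      filter_upwards [hdisj, e1, esw_mp.quasiMeasurePreserving.ae e2] with x h1 h2 h3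
      rw [← h2, ← h3, h1]) hr Z hZ
  refine le_trans (Finset.sum_le_sum fun z _ => ?_) this
  refine min_le_min ?_ ?_
  · rw [integral_congr_ae (ae_restrict_of_ae e1)]
    exact enorm_integral_le_lintegral_enorm _
  · rw [integral_congr_ae (ae_restrict_of_ae e2)]
    exact enorm_integral_le_lintegral_enorm _

lemma gridQ_ae (r : ℝ) (z : ℤ × ℤ × ℤ) : gridQ r z =ᵐ[volume] gridC r z :=
  Measure.set_prod_ae_eq Ioc_ae_eq_Icc (Measure.set_prod_ae_eq Ioc_ae_eq_Icc Ioc_ae_eq_Icc)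

lemma gridQ_vol (r : ℝ) (z : ℤ × ℤ × ℤ) : volume (gridQ r z) = ENNReal.ofReal r ^ 3 := by
  unfold gridQ
  rw [Measure.volume_eq_prod, Measure.prod_prod, Measure.volume_eq_prod, Measure.prod_prod]
  simp only [Real.volume_Ioc, add_sub_cancel_left]
  ring

/-- Centre of a grid cube. -/
def gridP (r : ℝ) (z : ℤ × ℤ × ℤ) : E3 := (z.1 * r + r / 2, z.2.1 * r + r / 2, z.2.2 * r + r / 2)

lemma gridC_ball (r : ℝ) (z : ℤ × ℤ × ℤ) : gridC r z = Metric.closedBall (gridP r z) (r / 2) := by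
  unfold gridP gridC
  rw [← closedBall_prod_same, ← closedBall_prod_same]
  have h : ∀ t : ℝ, Metric.closedBall (t + r / 2) (r / 2) = Set.Icc t (t + r) := by
    intro t
    rw [Real.closedBall_eq_Icc, add_sub_cancel_right, add_assoc, add_halves]
  rw [h, h, h]

/-- The mesh sizes. -/
def mesh (n : ℕ) : ℝ := 1 / (n + 1 : ℝ)

lemma mesh_pos (n : ℕ) : 0 < mesh n := by unfold mesh; positivity

lemma mesh_lim : Tendsto mesh atTop (𝓝 0) := tendsto_one_div_add_atTop_nhds_zero_nat

lemma mem_gridC_idx (n : ℕ) (x : E3) : x ∈ gridC (mesh n) (idx (mesh n) x) :=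
  gridQ_subset _ _ ((idx_iff (mesh_pos n) _ _).2 rfl)

lemma avg_tendsto {f : E3 → ℝ} (hf : Integrable f) :
    ∀ᵐ x, Tendsto (fun n => ⨍ y in gridQ (mesh n) (idx (mesh n) x), f y) atTop (𝓝 (f x)) := by
  filter_upwards [IsUnifLocDoublingMeasure.ae_tendsto_average (μ := (volume : Measure E3))
    hf.locallyIntegrable 1] with x hx
  have h := hx (l := atTop) (fun n => gridP (mesh n) (idx (mesh n) x)) (fun n => mesh n / 2) ?_ ?_
  · refine h.congr fun n => ?_
    rw [← gridC_ball]
    exact setAverage_congr (gridQ_ae _ _).symm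
  · rw [tendsto_nhdsWithin_iff]
    constructor
    · simpa using mesh_lim.div_const 2
    · exact Eventually.of_forall fun n => by
        have := mesh_pos n
        simp only [Set.mem_Ioi]; linarith
  · refine Eventually.of_forall fun n => ?_
    rw [one_mul, ← gridC_ball]
    exact mem_gridC_idx n x

lemma grid_core {Ω : Set E3} (hΩ : IsOpen Ω) {f g : ℕ → E3 → ℝ} (hf : ∀ k, Integrable (f k))
    (hg : ∀ k, Integrable (g k))
    {K : ℝ} (hKa : ∀ k, DualBound Ω (f k) (1, 0, 0) K) (hKc : ∀ k, DualBound Ω (f k) (0, 0, 1) K)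
    (hKb : ∀ k, DualBound (esw ⁻¹' Ω) (g k) (1, 0, 0) K)
    (hKd : ∀ k, DualBound (esw ⁻¹' Ω) (g k) (0, 0, 1) K)
    (hdisj : ∀ k, ∀ᵐ x, f k x * g k (esw x) = 0)
    {f0 g0 : E3 → ℝ} (hf0 : Integrable f0) (hg0 : Integrable g0)
    (hfl : ∀ r z, Tendsto (fun k => ∫ x in gridQ r z, f k x) atTop (𝓝 (∫ x in gridQ r z, f0 x)))
    (hgl : ∀ r z, Tendsto (fun k => ∫ x in gridQ r z, g k x) atTop (𝓝 (∫ x in gridQ r z, g0 x))) :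
    ∀ᵐ x, x ∈ Ω → f0 x * g0 (esw x) = 0 := by
  classical
  have hmin : ∀ {r : ℝ}, 0 < r → ∀ Z : Finset (ℤ × ℤ × ℤ), (∀ z ∈ Z, gridC r z ⊆ Ω) →
      ∑ z ∈ Z, min ‖∫ x in gridQ r z, f0 x‖ₑ ‖∫ x in gridQ r (zsw z), g0 x‖ₑ ≤
      ENNReal.ofReal r * (4 * ENNReal.ofReal K) := by
    intro r hr Z hZ
    have : Tendsto (fun k => ∑ z ∈ Z, min ‖∫ x in gridQ r z, f k x‖ₑ
        ‖∫ x in gridQ r (zsw z), g k x‖ₑ) atTop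
        (𝓝 (∑ z ∈ Z, min ‖∫ x in gridQ r z, f0 x‖ₑ ‖∫ x in gridQ r (zsw z), g0 x‖ₑ)) :=
      tendsto_finsetSum _ fun z _ => (hfl r z).enorm.min (hgl r (zsw z)).enorm
    exact le_of_tendsto' this fun k => grid_min2 hΩ (hf k) (hg k) (hKa k) (hKc k) (hKb k) (hKd k)
      (hdisj k) hr Z hZ
  let F : ℝ → ℤ × ℤ × ℤ → ℝ≥0∞ := fun r z => if gridC r z ⊆ Ω then
    min ‖⨍ x in gridQ r z, f0 x‖ₑ ‖⨍ x in gridQ r (zsw z), g0 x‖ₑ else 0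
  have hFv : ∀ {r : ℝ}, 0 < r → ∀ z, F r z * ENNReal.ofReal r ^ 3 = if gridC r z ⊆ Ω then
      min ‖∫ x in gridQ r z, f0 x‖ₑ ‖∫ x in gridQ r (zsw z), g0 x‖ₑ else 0 := by
    intro r hr z
    have key : ∀ (h : E3 → ℝ) z, ‖⨍ x in gridQ r z, h x‖ₑ * ENNReal.ofReal r ^ 3 =
        ‖∫ x in gridQ r z, h x‖ₑ := by
      intro h z
      have hv : volume (gridQ r z) ≠ ⊤ := by rw [gridQ_vol]; finiteness
      rw [← measure_smul_setAverage h hv, enorm_smul, mul_comm]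
      congr 1
      rw [measureReal_def, gridQ_vol, Real.enorm_of_nonneg ENNReal.toReal_nonneg,
        ENNReal.ofReal_toReal (by finiteness)]
    simp only [F]
    split_ifs
    · have hmono : Monotone (fun t : ℝ≥0∞ => t * ENNReal.ofReal r ^ 3) := by
        intro a b h
        dsimp only
        gcongr
      rw [← key f0 z, ← key g0 (zsw z)]
      exact hmono.map_min
    · simp
  have hidx : ∀ r, Measurable (idx r) := by
    intro r
    have h1 : Measurable (idx1 r) := by
      unfold idx1
      exact (Int.measurable_ceil.comp (measurable_id.div_const r)).sub_const 1
    unfold idx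
    exact (h1.comp measurable_fst).prodMk
      ((h1.comp measurable_snd.fst).prodMk (h1.comp measurable_snd.snd))
  have hI : ∀ {r : ℝ}, 0 < r → ∫⁻ x, F r (idx r x) ≤ ENNReal.ofReal r * (4 * ENNReal.ofReal K) := by
    intro r hr
    have hU : (⋃ z, gridQ r z) = Set.univ := by
      ext x
      simp [idx_iff hr]
    rw [← setLIntegral_univ, ← hU, lintegral_iUnion (gridQ_meas r) (gridQ_disj hr)]
    have : ∀ z, ∫⁻ x in gridQ r z, F r (idx r x) = if gridC r z ⊆ Ω then
      min ‖∫ x in gridQ r z, f0 x‖ₑ ‖∫ x in gridQ r (zsw z), g0 x‖ₑ else 0 := by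
      intro z
      rw [← hFv hr z, ← gridQ_vol r z, ← setLIntegral_const]
      refine setLIntegral_congr_fun (gridQ_meas r z) fun x hx => ?_
      rw [idx_iff hr] at hx
      simp only [hx]
    simp_rw [this]
    refine ENNReal.summable.tsum_le_of_sum_le fun Z => ?_
    rw [← Finset.sum_filter]
    exact hmin hr _ fun z hz => (Finset.mem_filter.1 hz).2
  have hlim0 : ∫⁻ x, liminf (fun n => F (mesh n) (idx (mesh n) x)) atTop = 0 := by
    refine le_antisymm ?_ bot_le
    refine (lintegral_liminf_le (fun n => ?_)).trans ?_
    · exact (measurable_of_countable (F (mesh n))).comp (hidx _)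
    · have h0 : Tendsto (fun n => ENNReal.ofReal (mesh n) * (4 * ENNReal.ofReal K)) atTop (𝓝 0) := by
        have := ENNReal.Tendsto.mul_const (b := 4 * ENNReal.ofReal K)
          (ENNReal.tendsto_ofReal mesh_lim) (Or.inr (by finiteness))
        simpa using this
      rw [← h0.liminf_eq]
      exact liminf_le_liminf (Eventually.of_forall fun n => hI (mesh_pos n))
  have hm : Measurable fun x => liminf (fun n => F (mesh n) (idx (mesh n) x)) atTop :=
    Measurable.liminf fun n => (measurable_of_countable (F (mesh n))).comp (hidx _)
  rw [lintegral_eq_zero_iff hm] at hlim0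
  filter_upwards [hlim0, avg_tendsto hf0, esw_mp.quasiMeasurePreserving.ae (avg_tendsto hg0)]
    with x h1 h2 h3 hx
  have h4 : Tendsto (fun n => F (mesh n) (idx (mesh n) x)) atTop (𝓝 (min ‖f0 x‖ₑ ‖g0 (esw x)‖ₑ)) := by
    refine (h2.enorm.min h3.enorm).congr' ?_
    obtain ⟨ε, hε, hb⟩ := Metric.isOpen_iff.1 hΩ x hx
    filter_upwards [mesh_lim.eventually (gt_mem_nhds hε)] with n hn
    have hsub : gridC (mesh n) (idx (mesh n) x) ⊆ Ω := by
      intro y hy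
      refine hb ?_
      have hxc := mem_gridC_idx n x
      rw [gridC_ball, Metric.mem_closedBall] at hy hxc
      rw [Metric.mem_ball]
      have := dist_triangle_right y x (gridP (mesh n) (idx (mesh n) x))
      linarith
    simp only [F, if_pos hsub]
    rfl
  rw [h4.liminf_eq] at h1
  have h5 : min ‖f0 x‖ₑ ‖g0 (esw x)‖ₑ = 0 := h1
  rcases min_eq_bot.1 h5 with h | h
  · rw [enorm_eq_zero.1 h, zero_mul]
  · rw [enorm_eq_zero.1 h, mul_zero]

lemma lin_setup {m n : V3} (hm : ‖m‖ = 1) (hn : ‖n‖ = 1)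
    (hli : ∀ a b : ℝ, a • m + b • n = 0 → a = 0 ∧ b = 0) :
    ∃ L L' : E3 ≃L[ℝ] V3, (∀ x, L' x = L (esw x)) ∧ ⟪L (1, 0, 0), m⟫ = 0 ∧ ⟪L (0, 0, 1), m⟫ = 0 ∧
      ⟪L' (1, 0, 0), n⟫ = 0 ∧ ⟪L' (0, 0, 1), n⟫ = 0 := by
  obtain ⟨C, hC0, hCm, hCn⟩ : ∃ C : V3, C ≠ 0 ∧ ⟪m, C⟫ = 0 ∧ ⟪n, C⟫ = 0 := by
    let T : V3 →ₗ[ℝ] ℝ × ℝ := (innerₛₗ ℝ m).prod (innerₛₗ ℝ n)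
    have hT : LinearMap.ker T ≠ ⊥ := LinearMap.ker_ne_bot_of_finrank_lt (by simp)
    obtain ⟨C, hC, hC0⟩ := Submodule.exists_mem_ne_zero_of_ne_bot hT
    have := LinearMap.mem_ker.1 hC
    simp only [T, LinearMap.prod_apply, Function.prod_apply, Prod.mk_eq_zero] at this
    exact ⟨C, hC0, this.1, this.2⟩
  set c : ℝ := ⟪m, n⟫ with hc
  have hnm : ⟪n, m⟫ = c := real_inner_comm _ _
  have hmm : ⟪m, m⟫ = 1 := by rw [real_inner_self_eq_norm_sq, hm]; norm_num
  have hnn : ⟪n, n⟫ = 1 := by rw [real_inner_self_eq_norm_sq, hn]; norm_num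
  have hc1 : 1 - c ^ 2 ≠ 0 := by
    intro h
    have h1 : ⟪n - c • m, n - c • m⟫ = 0 := by
      simp only [inner_sub_left, inner_sub_right, inner_smul_left, inner_smul_right, hnm, hmm, hnn,
        ← hc]
      simp
      linarith
    rw [inner_self_eq_zero] at h1
    have := hli (-c) 1 (by rw [← h1]; module)
    exact one_ne_zero this.2
  let T : E3 →ₗ[ℝ] V3 :=
    { toFun := fun x => x.1 • (n - c • m) + x.2.1 • (m - c • n) + x.2.2 • C
      map_add' := fun x y => by simp only [Prod.fst_add, Prod.snd_add]; module
      map_smul' := fun t x => by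
        simp only [Prod.smul_fst, Prod.smul_snd, smul_eq_mul, RingHom.id_apply]; module }
  have hTa : ∀ x, T x = x.1 • (n - c • m) + x.2.1 • (m - c • n) + x.2.2 • C := fun x => rfl
  have hinj : Function.Injective T := by
    rw [injective_iff_map_eq_zero]
    rintro ⟨a, b, d⟩ h
    rw [hTa] at h
    simp only at h
    have hd : d = 0 := by
      have h1 : ⟪a • (n - c • m) + b • (m - c • n) + d • C, C⟫ = 0 := by rw [h, inner_zero_left]
      simp only [inner_add_left, inner_sub_left, inner_smul_left, hCm, hCn] at h1
      simpa [hC0] using h1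
    subst hd
    have h2 := hli (b - a * c) (a - b * c) (by rw [← h]; module)
    have h3 : a * (1 - c ^ 2) = 0 := by linear_combination h2.2 + c * h2.1
    have ha : a = 0 := (mul_eq_zero.1 h3).resolve_right hc1
    subst ha
    have hb : b = 0 := by linarith [h2.1]
    subst hb
    rfl
  let L : E3 ≃L[ℝ] V3 :=
    (LinearEquiv.ofInjectiveOfFinrankEq T hinj (by simp)).toContinuousLinearEquiv
  have hL : ∀ x, L x = T x := fun x => rfl
  let S : E3 ≃ₗ[ℝ] E3 :=
    { toFun := esw
      invFun := esw
      map_add' := fun x y => rfl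
      map_smul' := fun t x => rfl
      left_inv := fun x => rfl
      right_inv := fun x => rfl }
  refine ⟨L, S.toContinuousLinearEquiv.trans L, fun x => rfl, ?_, ?_, ?_, ?_⟩
  · rw [hL, hTa]
    simp [inner_sub_left, inner_smul_left, hnm, hm]
  · rw [hL, hTa]
    simp [real_inner_comm, hCm]
  · change ⟪T (0, 1, 0), n⟫ = 0
    rw [hTa]
    simp [inner_sub_left, inner_smul_left, ← hc, hn]
  · change ⟪T (0, 0, 1), n⟫ = 0
    rw [hTa]
    simp [real_inner_comm, hCn]

lemma lin_measure (L : E3 ≃L[ℝ] V3) :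
    ∃ c : ℝ, 0 < c ∧ (∀ F : V3 → ℝ, ∫ x, F (L x) = c * ∫ y, F y) ∧
      (∀ F : V3 → ℝ, Integrable F → Integrable fun x => F (L x)) ∧
      (∀ P : V3 → Prop, (∀ᵐ y, P y) ↔ ∀ᵐ x, P (L x)) := by
  have hme : MeasurableEmbedding L := L.toHomeomorph.measurableEmbedding
  have hH : ((volume : Measure E3).map L).IsAddHaarMeasure :=
    L.isAddHaarMeasure_map volume
  set c := Measure.addHaarScalarFactor ((volume : Measure E3).map L) (volume : Measure V3) with hc
  have hc0 : 0 < c := Measure.addHaarScalarFactor_pos_of_isAddHaarMeasure _ _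
  have hmap : (volume : Measure E3).map L = c • (volume : Measure V3) :=
    Measure.isAddLeftInvariant_eq_smul _ _
  refine ⟨c, by exact_mod_cast hc0, fun F => ?_, fun F hF => ?_, fun P => ?_⟩
  · rw [← hme.integral_map, hmap, integral_smul_nnreal_measure]
    rfl
  · have : Integrable F ((volume : Measure E3).map L) := by
      rw [hmap]
      exact hF.smul_measure_nnreal
    exact (hme.integrable_map_iff).1 this
  · rw [← hme.ae_map_iff, hmap, Measure.ae_smul_measure_iff hc0.ne']

lemma memLpV_integrable {p : ℝ} (hp : 1 ≤ p) {Ω : Set V3} (hΩb : Bornology.IsBounded Ω)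
    {f : V3 → V3} (hf : MemLpV p Ω f) : IntegrableOn f Ω := by
  have hfin : IsFiniteMeasure (volume.restrict Ω) :=
    ⟨by rw [Measure.restrict_apply_univ]; exact hΩb.measure_lt_top⟩
  have h2 : Integrable (fun x => 1 + ‖f x‖ ^ p) (volume.restrict Ω) :=
    (integrable_const 1).add hf.2
  refine h2.mono' hf.1 (Eventually.of_forall fun x => ?_)
  have h0 := norm_nonneg (f x)
  have h3 : 0 ≤ ‖f x‖ ^ p := Real.rpow_nonneg h0 p
  rcases le_total ‖f x‖ 1 with h | h
  · linarith
  · have := Real.rpow_le_rpow_of_exponent_le h hp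
    rw [Real.rpow_one] at this
    linarith

lemma conj_ind {p : ℝ} (hp : 1 ≤ p) {Ω : Set V3} (hΩb : Bornology.IsBounded Ω)
    {B : Set V3} (hB : MeasurableSet B) (u : V3) : ConjTestV p Ω (B.indicator fun _ => u) := by
  have hfin : IsFiniteMeasure (volume.restrict Ω) :=
    ⟨by rw [Measure.restrict_apply_univ]; exact hΩb.measure_lt_top⟩
  refine ⟨(stronglyMeasurable_const.indicator hB).aestronglyMeasurable, ?_⟩
  rcases hp.eq_or_lt with h | h
  · refine Or.inl ⟨h.symm, ‖u‖, Eventually.of_forall fun x => ?_⟩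
    exact norm_indicator_le_norm_self _ _
  · refine Or.inr ⟨h, ?_⟩
    have hq : p / (p - 1) ≠ 0 := (div_pos (by linarith) (by linarith)).ne'
    have : (fun x => ‖B.indicator (fun _ => u) x‖ ^ (p / (p - 1))) =
        B.indicator (fun _ => ‖u‖ ^ (p / (p - 1))) := by
      ext x
      by_cases hx : x ∈ B
      · simp [hx]
      · simp [hx, Real.zero_rpow hq]
    rw [this]
    exact (integrable_const _).indicator hB

lemma DualBound.mono {Ω : Set E3} {f : E3 → ℝ} {v : E3} {K K' : ℝ} (h : DualBound Ω f v K)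
    (hK : K ≤ K') : DualBound Ω f v K' := fun φ h1 h2 h3 h4 => (h φ h1 h2 h3 h4).trans hK

lemma onb_expand {m e₁ e₂ : V3} (hm : ‖m‖ = 1) (he : ONBperp m e₁ e₂) {w : V3} (hw : ⟪w, m⟫ = 0) :
    ∃ a b : ℝ, w = a • e₁ + b • e₂ ∧ a ^ 2 + b ^ 2 = ‖w‖ ^ 2 := by
  obtain ⟨h1, h2, h12, h1m, h2m⟩ := he
  have h11 : ⟪e₁, e₁⟫ = 1 := by rw [real_inner_self_eq_norm_sq, h1]; norm_num
  have h22 : ⟪e₂, e₂⟫ = 1 := by rw [real_inner_self_eq_norm_sq, h2]; norm_num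
  have h21 : ⟪e₂, e₁⟫ = 0 := by rw [real_inner_comm]; exact h12
  have hon : Orthonormal ℝ ![e₁, e₂, m] := by
    constructor
    · intro i; fin_cases i <;> simp [h1, h2, hm]
    · intro i j hij
      fin_cases i <;> fin_cases j <;>
        simp_all [real_inner_comm]
  have hspan : ⊤ ≤ Submodule.span ℝ (Set.range ![e₁, e₂, m]) := by
    rw [hon.linearIndependent.span_eq_top_of_card_eq_finrank (by simp)]
  let bb := OrthonormalBasis.mk hon hspan
  have hsum := bb.sum_repr w
  rw [Fin.sum_univ_three] at hsum
  simp only [bb.repr_apply_apply, bb, OrthonormalBasis.coe_mk] at hsum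
  simp only [Matrix.cons_val_zero, Matrix.cons_val_one, Matrix.cons_val] at hsum
  rw [real_inner_comm w m] at hsum
  have hw' : ⟪e₁, w⟫ • e₁ + ⟪e₂, w⟫ • e₂ = w := by
    rwa [hw, zero_smul, add_zero] at hsum
  refine ⟨⟪e₁, w⟫, ⟪e₂, w⟫, hw'.symm, ?_⟩
  rw [← real_inner_self_eq_norm_sq]
  nth_rewrite 3 [← hw']
  rw [inner_add_left, inner_smul_left, inner_smul_left]
  simp
  ring

lemma dual_of_ptv {Ω : Set V3} (hΩ : IsOpen Ω) {m e₁ e₂ : V3} (hm : ‖m‖ = 1)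
    (he : ONBperp m e₁ e₂) {s : V3 → V3} {K : ℝ≥0∞} (hK : K < ⊤) (hs : PTV Ω e₁ e₂ s ≤ K)
    (L : E3 ≃L[ℝ] V3) {c : ℝ} (hc : 0 < c) (hL : ∀ F : V3 → ℝ, ∫ x, F (L x) = c * ∫ y, F y)
    {v : E3} (hv : ⟪L v, m⟫ = 0) (i : Fin 3) {R : ℝ} (hR0 : 0 < R) (hR : ‖L v‖ ≤ R) :
    DualBound (L ⁻¹' Ω) (fun x => Ω.indicator (fun y => s y i) (L x)) v (c * (R * K.toReal)) := by
  intro φ h1 h2 h3 h4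
  obtain ⟨a, b, hab, hab2⟩ := onb_expand hm he hv
  set ψ : V3 → ℝ := fun y => φ (L.symm y) with hψ
  have hψ1 : ContDiff ℝ 1 ψ := h1.comp L.symm.contDiff
  have hψ2 : HasCompactSupport ψ := h2.comp_homeomorph L.symm.toHomeomorph
  have hψ3 : tsupport ψ ⊆ Ω := by
    have : tsupport ψ = L.symm ⁻¹' tsupport φ :=
      tsupport_comp_eq_preimage φ L.symm.toHomeomorph
    rw [this]
    intro y hy
    have := h3 hy
    simpa using this
  set u : V3 := EuclideanSpace.single i (1 : ℝ) with hu
  have hun : ‖u‖ = 1 := by simp [hu]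
  have hC : ∀ t : ℝ, C1c Ω (fun y => ψ y • (t • u)) := by
    intro t
    refine ⟨hψ1.smul contDiff_const, hψ2.smul_right, (tsupport_smul_subset_left _ _).trans hψ3⟩
  have hle := (le_iSup (fun φ : {φ : (V3 → V3) × (V3 → V3) //
      C1c Ω φ.1 ∧ C1c Ω φ.2 ∧ ∀ x, ‖φ.1 x‖ ^ 2 + ‖φ.2 x‖ ^ 2 ≤ 1} =>
    ENNReal.ofReal
      (∫ x in Ω, (⟪s x, fderiv ℝ (φ : (V3 → V3) × (V3 → V3)).1 x e₁⟫ +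
        ⟪s x, fderiv ℝ (φ : (V3 → V3) × (V3 → V3)).2 x e₂⟫)))
    ⟨(fun y => ψ y • ((a / R) • u), fun y => ψ y • ((b / R) • u)), hC _, hC _, fun y => by
      simp only [norm_smul, hun, mul_one, Real.norm_eq_abs, mul_pow, sq_abs, div_pow]
      have e1 : ψ y ^ 2 ≤ 1 := by
        rw [sq_le_one_iff_abs_le_one]; exact h4 _
      have e2 : a ^ 2 + b ^ 2 ≤ R ^ 2 := by
        rw [hab2]; exact pow_le_pow_left₀ (norm_nonneg _) hR 2
      calc ψ y ^ 2 * (a ^ 2 / R ^ 2) + ψ y ^ 2 * (b ^ 2 / R ^ 2)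
          = ψ y ^ 2 * ((a ^ 2 + b ^ 2) / R ^ 2) := by ring
        _ ≤ 1 * 1 := by
            refine mul_le_mul e1 ?_ (by positivity) zero_le_one
            rw [div_le_one (by positivity)]; exact e2
        _ = 1 := one_mul 1⟩).trans hs
  have hle2 := (ENNReal.ofReal_le_iff_le_toReal hK.ne).1 hle
  have hfd : ∀ (t : ℝ) (y w : V3), fderiv ℝ (fun y => ψ y • (t • u)) y w =
      (fderiv ℝ ψ y w * t) • u := by
    intro t y w
    rw [fderiv_smul_const (hψ1.differentiable one_ne_zero y)]
    simp [smul_smul]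
  have hfψ : ∀ y, fderiv ℝ ψ y (L v) = fderiv ℝ φ (L.symm y) v := by
    intro y
    have hd : HasFDerivAt ψ ((fderiv ℝ φ (L.symm y)).comp (L.symm : V3 →L[ℝ] E3)) y :=
      ((h1.differentiable one_ne_zero (L.symm y)).hasFDerivAt).comp y L.symm.hasFDerivAt
    rw [hd.fderiv]
    simp
  have hinn : ∀ y, ⟪s y, fderiv ℝ (fun y => ψ y • ((a / R) • u)) y e₁⟫ +
        ⟪s y, fderiv ℝ (fun y => ψ y • ((b / R) • u)) y e₂⟫ =
      R⁻¹ * (s y i * fderiv ℝ φ (L.symm y) v) := by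
    intro y
    have hsu : ⟪s y, u⟫ = s y i := by simp [hu, EuclideanSpace.inner_single_right]
    rw [hfd, hfd, ← hfψ, hab, map_add, map_smul, map_smul, inner_smul_right, inner_smul_right, hsu]
    simp only [smul_eq_mul]
    ring
  simp only [hinn] at hle2
  rw [integral_const_mul] at hle2
  have hfin : ∫ x, Ω.indicator (fun y => s y i) (L x) * fderiv ℝ φ x v =
      c * ∫ y in Ω, s y i * fderiv ℝ φ (L.symm y) v := by
    have := hL (Ω.indicator fun y => s y i * fderiv ℝ φ (L.symm y) v)
    rw [integral_indicator hΩ.measurableSet] at this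
    rw [← this]
    refine integral_congr_ae (Eventually.of_forall fun x => ?_)
    by_cases hx : L x ∈ Ω
    · simp [hx]
    · simp [hx]
  rw [hfin]
  refine mul_le_mul_of_nonneg_left ?_ hc.le
  rwa [inv_mul_le_iff₀ hR0] at hle2

lemma cell_int {Ω : Set V3} (hΩ : IsOpen Ω) (L : E3 ≃L[ℝ] V3) {c : ℝ}
    (hL : ∀ F : V3 → ℝ, ∫ x, F (L x) = c * ∫ y, F y) (t : V3 → V3) (i : Fin 3)
    {Q : Set E3} (hQ : MeasurableSet Q) :
    ∫ x in Q, Ω.indicator (fun y => t y i) (L x) =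
      c * ∫ y in Ω, ⟪t y, (L.symm ⁻¹' Q).indicator (fun _ => EuclideanSpace.single i (1 : ℝ)) y⟫ := by
  have := hL (Ω.indicator fun y =>
    ⟪t y, (L.symm ⁻¹' Q).indicator (fun _ => EuclideanSpace.single i (1 : ℝ)) y⟫)
  rw [integral_indicator hΩ.measurableSet] at this
  rw [← this, ← integral_indicator hQ]
  refine integral_congr_ae (Eventually.of_forall fun x => ?_)
  by_cases hx : L x ∈ Ω <;> by_cases hxQ : x ∈ Q <;>
    simp [hx, hxQ, EuclideanSpace.inner_single_right]

lemma pair_zero {Ω : Set V3} (hΩo : IsOpen Ω) (hΩb : Bornology.IsBounded Ω)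
    {p : ℝ} (hp : 1 ≤ p) {m n : V3} (hm : ‖m‖ = 1) (hn : ‖n‖ = 1)
    (hli : ∀ a b : ℝ, a • m + b • n = 0 → a = 0 ∧ b = 0)
    {e₁ e₂ d₁ d₂ : V3} (he : ONBperp m e₁ e₂) (hd : ONBperp n d₁ d₂)
    {S T : ℕ → V3 → V3} {s t : V3 → V3}
    (hS : ∀ k, MemLpV p Ω (S k)) (hT : ∀ k, MemLpV p Ω (T k))
    (hs : MemLpV p Ω s) (ht : MemLpV p Ω t)
    (hplane : ∀ k, ∀ᵐ x ∂volume.restrict Ω, ‖S k x‖ * ‖T k x‖ = 0)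
    (hSw : WeakLpV p Ω S s) (hTw : WeakLpV p Ω T t)
    {K : ℝ≥0∞} (hK : K < ⊤) (hSK : ∀ k, PTV Ω e₁ e₂ (S k) ≤ K) (hTK : ∀ k, PTV Ω d₁ d₂ (T k) ≤ K)
    (i j : Fin 3) : ∀ᵐ x ∂volume.restrict Ω, s x i * t x j = 0 := by
  obtain ⟨L, L', hLL, h1, h2, h3, h4⟩ := lin_setup hm hn hli
  obtain ⟨c, hc, hcI, hcInt, hcae⟩ := lin_measure L
  obtain ⟨c', hc', hcI', hcInt', hcae'⟩ := lin_measure L'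
  obtain ⟨R, hR0, hRa, hRb, hRc, hRd⟩ : ∃ R : ℝ, 0 < R ∧ ‖L (1, 0, 0)‖ ≤ R ∧ ‖L (0, 0, 1)‖ ≤ R ∧
      ‖L' (1, 0, 0)‖ ≤ R ∧ ‖L' (0, 0, 1)‖ ≤ R := by
    have a1 := norm_nonneg (L (1, 0, 0))
    have a2 := norm_nonneg (L (0, 0, 1))
    have a3 := norm_nonneg (L' (1, 0, 0))
    have a4 := norm_nonneg (L' (0, 0, 1))
    refine ⟨‖L (1, 0, 0)‖ + ‖L (0, 0, 1)‖ + ‖L' (1, 0, 0)‖ + ‖L' (0, 0, 1)‖ + 1, ?_, ?_, ?_, ?_, ?_⟩ <;>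
      linarith
  have hIntg : ∀ {w : V3 → V3} (a : Fin 3), MemLpV p Ω w →
      Integrable (Ω.indicator fun y => w y a) := by
    intro w a hw
    rw [integrable_indicator_iff hΩo.measurableSet]
    have := (memLpV_integrable hp hΩb hw)
    exact (EuclideanSpace.proj a : V3 →L[ℝ] ℝ).integrable_comp this
  have hpre : L' ⁻¹' Ω = esw ⁻¹' (L ⁻¹' Ω) := by
    ext x
    simp [hLL]
  have hesw : ∀ x, L' (esw x) = L x := fun x => hLL (esw x)
  have hle1 : c * (R * K.toReal) ≤ max c c' * (R * K.toReal) :=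
    mul_le_mul_of_nonneg_right (le_max_left _ _) (by positivity)
  have hle2 : c' * (R * K.toReal) ≤ max c c' * (R * K.toReal) :=
    mul_le_mul_of_nonneg_right (le_max_right _ _) (by positivity)
  have key := grid_core (Ω := L ⁻¹' Ω) (hΩo.preimage L.continuous)
    (f := fun k x => Ω.indicator (fun y => S k y i) (L x))
    (g := fun k x => Ω.indicator (fun y => T k y j) (L' x))
    (f0 := fun x => Ω.indicator (fun y => s y i) (L x))
    (g0 := fun x => Ω.indicator (fun y => t y j) (L' x))
    (K := max c c' * (R * K.toReal))
    (fun k => hcInt _ (hIntg i (hS k))) (fun k => hcInt' _ (hIntg j (hT k)))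
    (fun k => (dual_of_ptv hΩo hm he hK (hSK k) L hc hcI h1 i hR0 hRa).mono hle1)
    (fun k => (dual_of_ptv hΩo hm he hK (hSK k) L hc hcI h2 i hR0 hRb).mono hle1)
    (fun k => by
      rw [← hpre]
      exact (dual_of_ptv hΩo hn hd hK (hTK k) L' hc' hcI' h3 j hR0 hRc).mono hle2)
    (fun k => by
      rw [← hpre]
      exact (dual_of_ptv hΩo hn hd hK (hTK k) L' hc' hcI' h4 j hR0 hRd).mono hle2)
    (fun k => by
      have := (ae_restrict_iff' hΩo.measurableSet).1 (hplane k)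
      have := (hcae _).1 this
      filter_upwards [this] with x hx
      rw [hesw]
      by_cases hxΩ : L x ∈ Ω
      · rw [Set.indicator_of_mem hxΩ, Set.indicator_of_mem hxΩ]
        rcases mul_eq_zero.1 (hx hxΩ) with h | h
        · rw [norm_eq_zero.1 h]; simp
        · rw [norm_eq_zero.1 h]; simp
      · rw [Set.indicator_of_notMem hxΩ, zero_mul])
    (hcInt _ (hIntg i hs)) (hcInt' _ (hIntg j ht))
    (fun r z => by
      simp only [cell_int hΩo L hcI _ _ (gridQ_meas r z)]
      exact (hSw _ (conj_ind hp hΩb (L.symm.continuous.measurable (gridQ_meas r z)) _)).const_mul c)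
    (fun r z => by
      simp only [cell_int hΩo L' hcI' _ _ (gridQ_meas r z)]
      exact (hTw _ (conj_ind hp hΩb
        (L'.symm.continuous.measurable (gridQ_meas r z)) _)).const_mul c')
  rw [ae_restrict_iff' hΩo.measurableSet, hcae]
  filter_upwards [key] with x hx hxΩ
  have := hx hxΩ
  rwa [hesw, Set.indicator_of_mem hxΩ, Set.indicator_of_mem hxΩ] at this

/-- The single-plane condition is preserved under weak `L^p` convergence,
provided the density of geometrically necessary dislocations is uniformly bounded:
if each `{s_j^k}` satisfies the single-plane condition, `s_j^k ⇀ s_j` weakly in `L^p`,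
and `Σ_j ∫_Ω |∇_{m_j^⊥} s_j^k| ≤ K` uniformly, then `{s_j}` satisfies the single-plane
condition. -/
theorem single_plane_condition_weakly_closed
    (Ω : Set V3) (hΩo : IsOpen Ω) (hΩb : Bornology.IsBounded Ω)
    (p : ℝ) (hp : 1 ≤ p)
    (N : ℕ) (m : Fin N → V3) (hm : ∀ j, ‖m j‖ = 1)
    (hmli : ∀ i j, i ≠ j → ∀ a b : ℝ, a • m i + b • m j = 0 → a = 0 ∧ b = 0)
    (e : Fin N → V3 × V3) (he : ∀ j, ONBperp (m j) (e j).1 (e j).2)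
    (sk : ℕ → Fin N → V3 → V3) (s : Fin N → V3 → V3)
    (hskLp : ∀ k j, MemLpV p Ω (sk k j)) (hsLp : ∀ j, MemLpV p Ω (s j))
    -- (P1): single-plane condition along the sequence
    (hperp : ∀ k j, ∀ᵐ x ∂volume.restrict Ω, ⟪sk k j x, m j⟫ = 0)
    (hplane : ∀ k, ∀ i j, i ≠ j →
      ∀ᵐ x ∂volume.restrict Ω, ‖sk k i x‖ * ‖sk k j x‖ = 0)
    -- (P2): weak convergence in L^p
    (hweak : ∀ j, WeakLpV p Ω (fun k => sk k j) (s j))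
    -- (P3): uniformly bounded dislocation density
    (K : ℝ≥0∞) (hK : K < ⊤)
    (hcurl : ∀ k, ∑ j, PTV Ω (e j).1 (e j).2 (sk k j) ≤ K) :
    (∀ j, ∀ᵐ x ∂volume.restrict Ω, ⟪s j x, m j⟫ = 0) ∧
    (∀ i j, i ≠ j → ∀ᵐ x ∂volume.restrict Ω, ‖s i x‖ * ‖s j x‖ = 0) := by
  have hfin : IsFiniteMeasure (volume.restrict Ω) :=
    ⟨by rw [Measure.restrict_apply_univ]; exact hΩb.measure_lt_top⟩
  refine ⟨fun j => ?_, fun i j hij => ?_⟩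
  · have hI : Integrable (fun x => ⟪s j x, m j⟫) (volume.restrict Ω) :=
      (memLpV_integrable hp hΩb (hsLp j)).inner_const (m j)
    refine hI.ae_eq_zero_of_forall_setIntegral_eq_zero fun B hB _ => ?_
    have key : ∀ t : V3 → V3, ∫ x in Ω, ⟪t x, B.indicator (fun _ => m j) x⟫ =
        ∫ x in B, ⟪t x, m j⟫ ∂volume.restrict Ω := by
      intro t
      rw [← integral_indicator hB]
      refine integral_congr_ae (Eventually.of_forall fun x => ?_)
      by_cases hx : x ∈ B <;> simp [hx]
    have h := hweak j _ (conj_ind hp hΩb hB (m j))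
    simp only [key] at h
    refine tendsto_nhds_unique h ?_
    refine tendsto_const_nhds.congr fun k => ?_
    refine (integral_eq_zero_of_ae ?_).symm
    exact ae_restrict_of_ae (hperp k j)
  · have hPTV : ∀ k l, PTV Ω (e l).1 (e l).2 (sk k l) ≤ K := fun k l =>
      (Finset.single_le_sum (f := fun l => PTV Ω (e l).1 (e l).2 (sk k l))
        (fun _ _ => bot_le) (Finset.mem_univ l)).trans (hcurl k)
    have h : ∀ a b : Fin 3, ∀ᵐ x ∂volume.restrict Ω, s i x a * s j x b = 0 := fun a b =>
      pair_zero hΩo hΩb hp (hm i) (hm j) (hmli i j hij) (he i) (he j)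
        (fun k => hskLp k i) (fun k => hskLp k j) (hsLp i) (hsLp j)
        (fun k => hplane k i j hij) (hweak i) (hweak j) hK (fun k => hPTV k i)
        (fun k => hPTV k j) a b
    have h' := ae_all_iff.2 fun a => ae_all_iff.2 (h a)
    filter_upwards [h'] with x hx
    by_cases hz : s i x = 0
    · simp [hz]
    · obtain ⟨a, ha⟩ : ∃ a, s i x a ≠ 0 := by
        by_contra! hcon
        exact hz (by ext a; simpa using hcon a)
      have : s j x = 0 := by
        ext b
        simpa using (mul_eq_zero.1 (hx a b)).resolve_left ha
      simp [this]

end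
end

section
/- Let m_1, m_2 ∈ ℝ³ be linearly independent unit vectors. Let d_1 be the unit vector in span{m_1,m_2} orthogonal to m_2 with d_1·m_1 > 0, let d_2 be the unit vector in span{m_1,m_2} orthogonal to m_1 with d_2·m_2 > 0, and let n := (m_1×m_2)/|m_1×m_2|. Then there exists a constant c > 0, depending only on m_1 and m_2, such that for every open set V ⊆ ℝ³ and all s_1, s_2 ∈ L¹(V;ℝ³) with s_1(x)·m_1 = 0 and s_2(x)·m_2 = 0 for a.e. x ∈ V, one has ∫_V |∇_{m_1^⊥} s_1| + ∫_V |∇_{m_2^⊥} s_2| ≥ c ( TV_{d_1}(|s_2|; V) + TV_{d_2}(|s_1|; V) + TV_{n}(|s_1|; V) + TV_{n}(|s_2|; V) ), where |s_j| denotes the pointwise Euclidean norm of s_j. -/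
open MeasureTheory Filter Topology Matrix
open scoped ENNReal RealInnerProductSpace

noncomputable section

/-- The directional total variation `TV_d(f; U)`, defined by duality. -/
def dirTV (U : Set V3) (d : V3) (f : V3 → ℝ) : ℝ≥0∞ :=
  ⨆ φ : {φ : V3 → ℝ // ContDiff ℝ 1 φ ∧ HasCompactSupport φ ∧ tsupport φ ⊆ U ∧
      ∀ x, |φ x| ≤ 1},
    ENNReal.ofReal (∫ x in U, f x * fderiv ℝ (φ : V3 → ℝ) x d)

lemma aux_int {E : Type*} [NormedAddCommGroup E] {g : V3 → E} (hg : Continuous g)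
    (hc : HasCompactSupport g) : Integrable g (volume : Measure V3) :=
  hg.integrable_of_hasCompactSupport hc

/-- Regularized smooth case. -/
lemma smooth_case_reg (d : V3) (u : V3 → V3) (hu : ContDiff ℝ 1 u) (φ : V3 → ℝ)
    (hφ : ContDiff ℝ 1 φ) (hφc : HasCompactSupport φ) (hφ1 : ∀ x, |φ x| ≤ 1) (K : ℝ)
    (hK : ∀ ψ : V3 → V3, ContDiff ℝ 1 ψ → HasCompactSupport ψ → tsupport ψ ⊆ tsupport φ →
      (∀ x, ‖ψ x‖ ≤ 1) → ∫ x, ⟪u x, fderiv ℝ ψ x d⟫ ≤ K) (δ : ℝ) (hδ : 0 < δ) :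
    ∫ x, Real.sqrt (‖u x‖ ^ 2 + δ ^ 2) * fderiv ℝ φ x d ≤ K := by
  set f : V3 → ℝ := fun x => Real.sqrt (‖u x‖ ^ 2 + δ ^ 2) with hfdef
  have hpos : ∀ x, 0 < ‖u x‖ ^ 2 + δ ^ 2 := fun x => by positivity
  have hfpos : ∀ x, 0 < f x := fun x => Real.sqrt_pos.2 (hpos x)
  have hf : ContDiff ℝ 1 f :=
    ContDiff.sqrt ((hu.norm_sq ℝ).add contDiff_const) (fun x => (hpos x).ne')
  have hfd : ∀ x, fderiv ℝ f x d = (f x)⁻¹ * ⟪u x, fderiv ℝ u x d⟫ := by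
    intro x
    have h1 : HasFDerivAt u (fderiv ℝ u x) x :=
      (hu.differentiable one_ne_zero x).hasFDerivAt
    have h2 := ((h1.norm_sq).add_const (δ ^ 2)).sqrt (hpos x).ne'
    rw [show fderiv ℝ f x = _ from h2.fderiv]
    have := (hfpos x).ne'
    simp only [hfdef] at this ⊢
    simp
    field_simp
  set ψ : V3 → V3 := fun x => (φ x * (f x)⁻¹) • u x with hψdef
  have hψ : ContDiff ℝ 1 ψ := (hφ.mul (hf.inv fun x => (hfpos x).ne')).smul hu
  have hsupp : Function.support ψ ⊆ Function.support φ := by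
    intro x hx h0
    exact hx (by simp [hψdef, h0])
  have hψc : HasCompactSupport ψ := hφc.mono hsupp
  have hψ1 : ∀ x, ‖ψ x‖ ≤ 1 := by
    intro x
    have hle : ‖u x‖ ≤ f x := Real.le_sqrt_of_sq_le (by nlinarith [sq_nonneg δ])
    have hq : (f x)⁻¹ * ‖u x‖ ≤ 1 := by
      rw [inv_mul_le_iff₀ (hfpos x)]; simpa using hle
    rw [hψdef]
    simp only [norm_smul, norm_mul, Real.norm_eq_abs]
    rw [abs_of_pos (inv_pos.2 (hfpos x)), mul_assoc]
    exact mul_le_one₀ (hφ1 x) (mul_nonneg (inv_pos.2 (hfpos x)).le (norm_nonneg _)) hq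
  have cu := hu.continuous
  have cψ := hψ.continuous
  have cf := hf.continuous
  have cφ := hφ.continuous
  have cdu : Continuous fun x => fderiv ℝ u x d :=
    (hu.continuous_fderiv one_ne_zero).clm_apply continuous_const
  have cdψ : Continuous fun x => fderiv ℝ ψ x d :=
    (hψ.continuous_fderiv one_ne_zero).clm_apply continuous_const
  have cdf : Continuous fun x => fderiv ℝ f x d :=
    (hf.continuous_fderiv one_ne_zero).clm_apply continuous_const
  have cdφ : Continuous fun x => fderiv ℝ φ x d :=
    (hφ.continuous_fderiv one_ne_zero).clm_apply continuous_const
  have sdψ : HasCompactSupport fun x => fderiv ℝ ψ x d := hψc.fderiv_apply ℝ d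
  have sdφ : HasCompactSupport fun x => fderiv ℝ φ x d := hφc.fderiv_apply ℝ d
  have e1 : ∫ x, ⟪u x, fderiv ℝ ψ x d⟫ = - ∫ x, ⟪fderiv ℝ u x d, ψ x⟫ := by
    refine integral_bilinear_fderiv_right_eq_neg_left_of_integrable (μ := volume)
      (f := u) (g := ψ) (v := d) (B := innerSL ℝ) ?_ ?_ ?_
      (fun x _ => hu.differentiable one_ne_zero x) (fun x _ => hψ.differentiable one_ne_zero x)
    · exact aux_int (cdu.inner cψ)
        (hψc.mono fun x hx h0 => hx (by simp [h0]))
    · exact aux_int (cu.inner cdψ)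
        (sdψ.mono fun x hx h0 => hx (by
          have h0' : fderiv ℝ ψ x d = 0 := h0
          simp only [h0', map_zero]))
    · exact aux_int (cu.inner cψ)
        (hψc.mono fun x hx h0 => hx (by simp [h0]))
  have e2 : ∫ x, f x * fderiv ℝ φ x d = - ∫ x, fderiv ℝ f x d * φ x := by
    refine integral_mul_fderiv_eq_neg_fderiv_mul_of_integrable ?_ ?_ ?_
      (fun x _ => hf.differentiable one_ne_zero x) (fun x _ => hφ.differentiable one_ne_zero x)
    · exact aux_int (cdf.mul cφ) hφc.mul_left
    · exact aux_int (cf.mul cdφ) sdφ.mul_left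
    · exact aux_int (cf.mul cφ) hφc.mul_left
  have e3 : ∫ x, ⟪fderiv ℝ u x d, ψ x⟫ = ∫ x, fderiv ℝ f x d * φ x := by
    congr 1
    ext x
    rw [hfd, hψdef]
    simp only [inner_smul_right]
    rw [real_inner_comm]
    ring
  change ∫ x, f x * fderiv ℝ φ x d ≤ K
  rw [e2, ← e3, ← e1]
  exact hK ψ hψ hψc (closure_mono hsupp) hψ1

lemma smooth_case (d : V3) (u : V3 → V3) (hu : ContDiff ℝ 1 u) (φ : V3 → ℝ)
    (hφ : ContDiff ℝ 1 φ) (hφc : HasCompactSupport φ) (hφ1 : ∀ x, |φ x| ≤ 1) (K : ℝ)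
    (hK : ∀ ψ : V3 → V3, ContDiff ℝ 1 ψ → HasCompactSupport ψ → tsupport ψ ⊆ tsupport φ →
      (∀ x, ‖ψ x‖ ≤ 1) → ∫ x, ⟪u x, fderiv ℝ ψ x d⟫ ≤ K) :
    ∫ x, ‖u x‖ * fderiv ℝ φ x d ≤ K := by
  have cu := hu.continuous
  have cdφ : Continuous fun x => fderiv ℝ φ x d :=
    (hφ.continuous_fderiv one_ne_zero).clm_apply continuous_const
  have sdφ : HasCompactSupport fun x => fderiv ℝ φ x d := hφc.fderiv_apply ℝ d
  have iw := (aux_int cdφ sdφ).abs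
  set A := ∫ x, |fderiv ℝ φ x d| with hA
  have key : ∀ δ : ℝ, 0 < δ → ∫ x, ‖u x‖ * fderiv ℝ φ x d ≤ K + δ * A := by
    intro δ hδ
    have h1 := smooth_case_reg d u hu φ hφ hφc hφ1 K hK δ hδ
    have i1 : Integrable (fun x => Real.sqrt (‖u x‖ ^ 2 + δ ^ 2) * fderiv ℝ φ x d) :=
      aux_int (by fun_prop) sdφ.mul_left
    have i0 : Integrable (fun x => ‖u x‖ * fderiv ℝ φ x d) :=
      aux_int (by fun_prop) sdφ.mul_left
    have h2 : ∫ x, ‖u x‖ * fderiv ℝ φ x d ≤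
        ∫ x, (Real.sqrt (‖u x‖ ^ 2 + δ ^ 2) * fderiv ℝ φ x d + δ * |fderiv ℝ φ x d|) := by
      refine integral_mono i0 (i1.add (iw.const_mul δ)) fun x => ?_
      have ha : ‖u x‖ ≤ Real.sqrt (‖u x‖ ^ 2 + δ ^ 2) :=
        Real.le_sqrt_of_sq_le (by nlinarith [sq_nonneg δ])
      have hb : Real.sqrt (‖u x‖ ^ 2 + δ ^ 2) ≤ ‖u x‖ + δ :=
        Real.sqrt_le_iff.2 ⟨by positivity, by nlinarith [norm_nonneg (u x)]⟩
      have hc : (‖u x‖ - Real.sqrt (‖u x‖ ^ 2 + δ ^ 2)) * fderiv ℝ φ x d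
          ≤ δ * |fderiv ℝ φ x d| := by
        refine (le_abs_self _).trans ?_
        rw [abs_mul]
        exact mul_le_mul_of_nonneg_right (abs_le.2 ⟨by linarith, by linarith⟩) (abs_nonneg _)
      dsimp only
      linarith
    rw [integral_add i1 (iw.const_mul δ), integral_const_mul] at h2
    linarith
  refine le_of_forall_pos_le_add fun ε hε => ?_
  have hA0 : 0 ≤ A := integral_nonneg fun x => abs_nonneg _
  refine (key (ε / (A + 1)) (by positivity)).trans ?_
  have : ε / (A + 1) * A ≤ ε := by
    rw [div_mul_eq_mul_div, div_le_iff₀ (by positivity)]; nlinarith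
  linarith

/-- testing the mollification -/
lemma mollify_test (d : V3) (S : V3 → V3) (hS : Integrable S) (η : V3 → ℝ)
    (hη0 : ∀ y, 0 ≤ η y) (hηi : Integrable η) (hη1 : ∫ y, η y = 1)
    (ψ : V3 → V3) (hψ : ContDiff ℝ 1 ψ) (hψc : HasCompactSupport ψ) (K : ℝ)
    (hK : ∀ y, η y ≠ 0 → ∫ x, ⟪S x, fderiv ℝ ψ (x + y) d⟫ ≤ K) :
    ∫ x, ⟪convolution η S (ContinuousLinearMap.lsmul ℝ ℝ) volume x, fderiv ℝ ψ x d⟫ ≤ K := by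
  have cdψ : Continuous fun x => fderiv ℝ ψ x d :=
    (hψ.continuous_fderiv one_ne_zero).clm_apply continuous_const
  have sdψ : HasCompactSupport fun x => fderiv ℝ ψ x d := hψc.fderiv_apply ℝ d
  obtain ⟨C, hC⟩ := cdψ.bounded_above_of_compact_support sdψ
  have hprod := hηi.convolution_integrand (μ := (volume : Measure V3))
    (ContinuousLinearMap.lsmul ℝ ℝ) hS
  have hprod2 : Integrable (fun p : V3 × V3 => ⟪η p.2 • S (p.1 - p.2), fderiv ℝ ψ p.1 d⟫)
      ((volume : Measure V3).prod volume) := by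
    refine (hprod.norm.mul_const C).mono ?_ ?_
    · exact hprod.aestronglyMeasurable.inner
        (cdψ.comp continuous_fst).aestronglyMeasurable
    · refine Eventually.of_forall fun p => ?_
      refine (norm_inner_le_norm _ _).trans ?_
      refine le_trans ?_ (le_abs_self _)
      exact mul_le_mul_of_nonneg_left (hC p.1) (norm_nonneg _)
  have h1 : ∫ x, ⟪convolution η S (ContinuousLinearMap.lsmul ℝ ℝ) volume x, fderiv ℝ ψ x d⟫
      = ∫ x, ∫ y, ⟪η y • S (x - y), fderiv ℝ ψ x d⟫ := by
    refine integral_congr_ae ?_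
    filter_upwards [hprod.prod_right_ae] with x hx
    simp only [convolution, ContinuousLinearMap.lsmul_apply] at hx ⊢
    rw [real_inner_comm, ← integral_inner hx]
    exact integral_congr_ae (Eventually.of_forall fun y => real_inner_comm _ _)
  rw [h1, integral_integral_swap hprod2]
  have h2 : ∀ y, ∫ x, ⟪η y • S (x - y), fderiv ℝ ψ x d⟫ ≤ η y * K := by
    intro y
    have : ∫ x, ⟪η y • S (x - y), fderiv ℝ ψ x d⟫
        = η y * ∫ x, ⟪S x, fderiv ℝ ψ (x + y) d⟫ := by
      rw [← integral_const_mul,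
        ← integral_add_right_eq_self (fun x => ⟪η y • S (x - y), fderiv ℝ ψ x d⟫) y]
      simp [inner_smul_left]
    rw [this]
    by_cases h0 : η y = 0
    · simp [h0]
    · exact mul_le_mul_of_nonneg_left (hK y h0) (hη0 y)
  calc _ ≤ ∫ y, η y * K := integral_mono hprod2.integral_prod_right (hηi.mul_const K) h2
    _ = K := by rw [integral_mul_const, hη1, one_mul]

/-- weighted convergence of mollifications -/
lemma mollify_approx (S : V3 → V3) (hS : Integrable S) (w : V3 → ℝ) (hw : Continuous w)
    (hwc : HasCompactSupport w) (τ : ℝ) (hτ : 0 < τ) :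
    ∃ r₀ > 0, ∀ η : ContDiffBump (0 : V3), η.rOut ≤ r₀ →
      ∫ x, ‖S x‖ * w x ≤
        (∫ x, ‖convolution (η.normed volume) S (ContinuousLinearMap.lsmul ℝ ℝ) volume x‖ * w x)
          + τ := by
  obtain ⟨M, hM⟩ := hw.bounded_above_of_compact_support hwc
  have hM0 : 0 ≤ M := (norm_nonneg _).trans (hM 0)
  have iw : Integrable (fun x => |w x|) := (aux_int hw hwc).abs
  set A := ∫ x, |w x| with hA
  have hA0 : 0 ≤ A := integral_nonneg fun x => abs_nonneg _
  set σ := τ / (A + 2 * M + 1) with hσ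
  have hσ0 : 0 < σ := by positivity
  obtain ⟨g, gc, hg, gcont, gint⟩ := hS.exists_hasCompactSupport_integral_sub_le hσ0
  have guc := gc.uniformContinuous_of_continuous gcont
  obtain ⟨r₀, hr₀, hr⟩ := Metric.uniformContinuous_iff.1 guc σ hσ0
  refine ⟨r₀, hr₀, fun η hη => ?_⟩
  set L := ContinuousLinearMap.lsmul ℝ ℝ (E := V3)
  set e := η.normed (volume : Measure V3) with he
  have hei : Integrable e := η.integrable_normed
  set R : V3 → V3 := fun x => S x - g x with hR
  have hRi : Integrable R := hS.sub gint
  have hconvS : Integrable (convolution e S L volume) := hei.integrable_convolution L hS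
  set N : V3 → ℝ := convolution e (fun x => ‖R x‖) (ContinuousLinearMap.mul ℝ ℝ) volume with hN
  have hNi : Integrable N := hei.integrable_convolution _ hRi.norm
  have hNint : ∫ x, N x = ∫ x, ‖R x‖ := by
    rw [hN, integral_convolution _ hei hRi.norm]
    simp [he, η.integral_normed]
  have hpt : ∀ᵐ x, ‖S x‖ * w x ≤ ‖convolution e S L volume x‖ * w x +
      (σ * |w x| + M * (N x + ‖R x‖)) := by
    have hp1 := (hei.convolution_integrand (μ := (volume : Measure V3)) L hRi).prod_right_ae
    have hp2 := (hei.convolution_integrand (μ := (volume : Measure V3)) L gint).prod_right_ae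
    filter_upwards [hp1, hp2] with x hx1 hx2
    have hsplit : convolution e S L volume x
        = convolution e g L volume x + convolution e R L volume x := by
      simp only [convolution]
      rw [← integral_add hx2 hx1]
      congr 1; ext1 y
      rw [← map_add]; simp [hR]
    have hgd : dist (convolution e g L volume x) (g x) ≤ σ :=
      η.dist_normed_convolution_le gcont.aestronglyMeasurable
        (fun y hy => (hr (lt_of_lt_of_le hy hη)).le)
    have hRN : ‖convolution e R L volume x‖ ≤ N x := by
      refine (norm_integral_le_integral_norm _).trans (le_of_eq ?_)
      refine integral_congr_ae (Eventually.of_forall fun y => ?_)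
      simp [L, norm_smul, he, abs_of_nonneg (η.nonneg_normed y)]
    have hdiff : ‖S x‖ - ‖convolution e S L volume x‖ ≤ σ + (N x + ‖R x‖) ∧
        ‖convolution e S L volume x‖ - ‖S x‖ ≤ σ + (N x + ‖R x‖) := by
      have hb : ‖convolution e S L volume x - S x‖ ≤ σ + (N x + ‖R x‖) := by
        have : convolution e S L volume x - S x
            = (convolution e g L volume x - g x) + (convolution e R L volume x - R x) := by
          rw [hsplit]; simp only [hR]; abel
        rw [this]
        rw [dist_eq_norm] at hgd
        have t1 := norm_add_le (convolution e g L volume x - g x) (convolution e R L volume x - R x)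
        have t2 := norm_sub_le (convolution e R L volume x) (R x)
        linarith
      have t3 := abs_le.1 ((abs_norm_sub_norm_le (convolution e S L volume x) (S x)).trans hb)
      exact ⟨by linarith [t3.1], t3.2⟩
    have hN0 : 0 ≤ N x + ‖R x‖ := add_nonneg ((norm_nonneg _).trans hRN) (norm_nonneg _)
    have hfin : (‖S x‖ - ‖convolution e S L volume x‖) * w x ≤
        (σ + (N x + ‖R x‖)) * |w x| := by
      refine (le_abs_self _).trans ?_
      rw [abs_mul]
      exact mul_le_mul_of_nonneg_right (abs_le.2 ⟨by linarith [hdiff.2], hdiff.1⟩) (abs_nonneg _)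
    have hMw : (N x + ‖R x‖) * |w x| ≤ (N x + ‖R x‖) * M :=
      mul_le_mul_of_nonneg_left (hM x) hN0
    linarith
  have iA : Integrable (fun x => ‖S x‖ * w x) :=
    hS.norm.mul_bdd (c := M) hw.aestronglyMeasurable (Eventually.of_forall hM)
  have iB : Integrable (fun x => ‖convolution e S L volume x‖ * w x) :=
    hconvS.norm.mul_bdd (c := M) hw.aestronglyMeasurable (Eventually.of_forall hM)
  have iC : Integrable (fun x => σ * |w x|) := iw.const_mul σ
  have iD : Integrable (fun x => M * (N x + ‖R x‖)) := (hNi.add hRi.norm).const_mul M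
  have iCD : Integrable (fun x => σ * |w x| + M * (N x + ‖R x‖)) := iC.add iD
  have hfinal := integral_mono_ae iA (iB.add iCD) hpt
  have hsum : ∫ x, (‖convolution e S L volume x‖ * w x +
      (σ * |w x| + M * (N x + ‖R x‖))) = (∫ x, ‖convolution e S L volume x‖ * w x) +
      (σ * A + M * ((∫ x, ‖R x‖) + ∫ x, ‖R x‖)) := by
    rw [integral_add iB iCD]
    congr 1
    rw [integral_add iC iD, integral_const_mul, integral_const_mul,
      integral_add hNi hRi.norm, hNint]
  have hfinal' := hfinal.trans_eq hsum
  refine hfinal'.trans ?_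
  have hRσ : ∫ x, ‖R x‖ ≤ σ := hg
  have hτσ : σ * (A + 2 * M + 1) = τ := by rw [hσ]; field_simp
  have : M * ((∫ x, ‖R x‖) + ∫ x, ‖R x‖) ≤ M * (σ + σ) :=
    mul_le_mul_of_nonneg_left (by linarith) hM0
  nlinarith

/-- Core lemma on the whole space. -/
lemma core (V : Set V3) (hV : IsOpen V) (d : V3) (S : V3 → V3) (hS : Integrable S) (K : ℝ)
    (hK : ∀ ψ : V3 → V3, C1c V ψ → (∀ x, ‖ψ x‖ ≤ 1) → ∫ x, ⟪S x, fderiv ℝ ψ x d⟫ ≤ K)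
    (φ : V3 → ℝ) (hφ : ContDiff ℝ 1 φ) (hφc : HasCompactSupport φ) (hφV : tsupport φ ⊆ V)
    (hφ1 : ∀ x, |φ x| ≤ 1) : ∫ x, ‖S x‖ * fderiv ℝ φ x d ≤ K := by
  have cdφ : Continuous fun x => fderiv ℝ φ x d :=
    (hφ.continuous_fderiv one_ne_zero).clm_apply continuous_const
  have sdφ : HasCompactSupport fun x => fderiv ℝ φ x d := hφc.fderiv_apply ℝ d
  refine le_of_forall_pos_le_add fun τ hτ => ?_
  obtain ⟨r₀, hr₀, hr⟩ := mollify_approx S hS _ cdφ sdφ τ hτ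
  obtain ⟨r₁, hr₁, hsub⟩ := hφc.isCompact.exists_thickening_subset_open hV hφV
  have hmin : 0 < min r₀ r₁ := lt_min hr₀ hr₁
  let η : ContDiffBump (0 : V3) := ⟨min r₀ r₁ / 2, min r₀ r₁, by positivity, by linarith⟩
  refine (hr η (min_le_left _ _)).trans (add_le_add_left ?_ _)
  have hsm : ContDiff ℝ 1 (convolution (η.normed volume) S (ContinuousLinearMap.lsmul ℝ ℝ)
      (volume : Measure V3)) := by
    have := η.hasCompactSupport_normed.contDiff_convolution_left (n := 1) (𝕜 := ℝ)
      (μ := (volume : Measure V3)) (ContinuousLinearMap.lsmul ℝ ℝ)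
      (η.contDiff_normed (μ := volume)) hS.locallyIntegrable
    exact_mod_cast this
  refine smooth_case d _ hsm φ hφ hφc hφ1 K fun ψ hψ hψc hψs hψ1 => ?_
  refine mollify_test d S hS _ η.nonneg_normed η.integrable_normed η.integral_normed ψ hψ hψc K
    fun y hy => ?_
  have hy' : y ∈ Metric.ball (0 : V3) (min r₀ r₁) := by
    have : y ∈ Function.support (η.normed (volume : Measure V3)) := hy
    rwa [η.support_normed_eq] at this
  have hT := hK (fun x => ψ (x + y)) ⟨hψ.comp (contDiff_id.add contDiff_const), ?_, ?_⟩
    (fun x => hψ1 _)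
  · simpa only [fderiv_comp_add_right] using hT
  · exact hψc.comp_homeomorph (Homeomorph.addRight y)
  · have : tsupport (fun x => ψ (x + y)) = (Homeomorph.addRight y) ⁻¹' tsupport ψ :=
      tsupport_comp_eq_preimage ψ (Homeomorph.addRight y)
    rw [this]
    intro x hx
    apply hsub
    rw [Metric.mem_thickening_iff]
    refine ⟨x + y, hψs hx, ?_⟩
    rw [mem_ball_zero_iff] at hy'
    rw [dist_eq_norm]
    simpa using lt_of_lt_of_le hy' (min_le_right _ _)

lemma perp_decomp (m e₁ e₂ d : V3) (hm : ‖m‖ = 1) (h : ONBperp m e₁ e₂) (hd : ‖d‖ = 1)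
    (hdm : ⟪d, m⟫ = 0) : ∃ a b : ℝ, d = a • e₁ + b • e₂ ∧ a ^ 2 + b ^ 2 = 1 := by
  obtain ⟨h1, h2, h12, h1m, h2m⟩ := h
  have hon : Orthonormal ℝ ![e₁, e₂, m] := by
    rw [orthonormal_iff_ite]
    have h21 : ⟪e₂, e₁⟫ = 0 := by rw [real_inner_comm]; exact h12
    have hm1 : ⟪m, e₁⟫ = 0 := by rw [real_inner_comm]; exact h1m
    have hm2 : ⟪m, e₂⟫ = 0 := by rw [real_inner_comm]; exact h2m
    intro i j
    fin_cases i <;> fin_cases j <;>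
      simp [h1, h2, hm, h12, h1m, h2m, h21, hm1, hm2]
  let B : OrthonormalBasis (Fin 3) ℝ V3 := OrthonormalBasis.mk hon (by
    have := hon.linearIndependent.span_eq_top_of_card_eq_finrank (by simp)
    rw [this])
  have hB : ∀ i, B i = ![e₁, e₂, m] i := fun i => by simp [B]
  have hsum := B.sum_repr' d
  rw [Fin.sum_univ_three] at hsum
  simp only [hB] at hsum
  simp only [Matrix.cons_val_zero, Matrix.cons_val_one, Matrix.cons_val] at hsum
  rw [real_inner_comm d m, hdm, zero_smul, add_zero] at hsum
  refine ⟨⟪e₁, d⟫, ⟪e₂, d⟫, hsum.symm, ?_⟩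
  have hn : ‖d‖ ^ 2 = ⟪e₁, d⟫ ^ 2 + ⟪e₂, d⟫ ^ 2 := by
    rw [← real_inner_self_eq_norm_sq]
    have h3 : ⟪⟪e₁, d⟫ • e₁ + ⟪e₂, d⟫ • e₂, d⟫ = ⟪e₁, d⟫ ^ 2 + ⟪e₂, d⟫ ^ 2 := by
      rw [inner_add_left, real_inner_smul_left, real_inner_smul_left]
      ring
    rwa [hsum] at h3
  rw [← hn, hd]; norm_num

lemma dirTV_le_PTV (m e₁ e₂ d : V3) (hm : ‖m‖ = 1) (h : ONBperp m e₁ e₂) (hd : ‖d‖ = 1)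
    (hdm : ⟪d, m⟫ = 0) (V : Set V3) (hV : IsOpen V) (s : V3 → V3) (hs : IntegrableOn s V) :
    dirTV V d (fun x => ‖s x‖) ≤ PTV V e₁ e₂ s := by
  obtain ⟨a, b, hdab, hab⟩ := perp_decomp m e₁ e₂ d hm h hd hdm
  by_cases htop : PTV V e₁ e₂ s = ⊤
  · rw [htop]; exact le_top
  refine iSup_le ?_
  rintro ⟨φ, hφ, hφc, hφV, hφ1⟩
  refine (ENNReal.ofReal_le_iff_le_toReal htop).2 ?_
  have hi : Integrable (V.indicator s) := hs.integrable_indicator hV.measurableSet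
  have hmain := core V hV d (V.indicator s) hi (PTV V e₁ e₂ s).toReal ?_ φ hφ hφc hφV hφ1
  · refine le_of_eq_of_le ?_ hmain
    rw [← integral_indicator hV.measurableSet]
    congr 1; ext x
    by_cases hx : x ∈ V <;> simp [hx]
  · rintro ψ ⟨hψ, hψc, hψV⟩ hψ1
    have hadm : ∀ t : ℝ, C1c V (fun x => t • ψ x) := fun t =>
      ⟨hψ.const_smul t, hψc.smul_left (f := fun _ => t),
        (tsupport_smul_subset_right (fun _ => t) ψ).trans hψV⟩
    have hle : ENNReal.ofReal (∫ x in V, (⟪s x, fderiv ℝ (fun x => a • ψ x) x e₁⟫ +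
        ⟪s x, fderiv ℝ (fun x => b • ψ x) x e₂⟫)) ≤ PTV V e₁ e₂ s := by
      refine le_iSup (fun φ : {φ : (V3 → V3) × (V3 → V3) //
          C1c V φ.1 ∧ C1c V φ.2 ∧ ∀ x, ‖φ.1 x‖ ^ 2 + ‖φ.2 x‖ ^ 2 ≤ 1} =>
        ENNReal.ofReal
        (∫ x in V, (⟪s x, fderiv ℝ (φ : (V3 → V3) × (V3 → V3)).1 x e₁⟫ +
        ⟪s x, fderiv ℝ (φ : (V3 → V3) × (V3 → V3)).2 x e₂⟫)))
        ⟨(fun x => a • ψ x, fun x => b • ψ x), hadm a, hadm b, fun x => ?_⟩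
      simp only [norm_smul, mul_pow, Real.norm_eq_abs, sq_abs]
      rw [← add_mul, hab, one_mul]
      exact pow_le_one₀ (norm_nonneg _) (hψ1 x)
    refine le_of_eq_of_le ?_ ((ENNReal.ofReal_le_iff_le_toReal htop).1 hle)
    rw [← integral_indicator hV.measurableSet]
    congr 1; ext x
    by_cases hx : x ∈ V
    · have hdψ := hψ.differentiable one_ne_zero x
      simp only [hx, Set.indicator_of_mem]
      rw [fderiv_fun_const_smul hdψ, fderiv_fun_const_smul hdψ, hdab]
      simp [inner_add_right, inner_smul_right]
    · simp [hx]

/-- For linearly independent unit slip normals `m₁, m₂`, with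
`d₁ ⊥ m₂`, `d₂ ⊥ m₁` the corresponding in-plane unit directions (positively oriented
with respect to `m₁`, resp. `m₂`), and `n` a unit normal to `span{m₁,m₂}`, there is a
constant `c > 0`, depending only on `m₁, m₂`, such that for any open `V` and any
`s₁, s₂ ∈ L¹(V;ℝ³)` with `s₁ ⊥ m₁`, `s₂ ⊥ m₂` a.e.,
`∫_V |∇_{m₁^⊥} s₁| + ∫_V |∇_{m₂^⊥} s₂| ≥ c (TV_{d₁}(|s₂|) + TV_{d₂}(|s₁|) + TV_n(|s₁|) + TV_n(|s₂|))`. -/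
theorem planar_curl_controls_transverse_variation
    (m₁ m₂ : V3) (hm₁ : ‖m₁‖ = 1) (hm₂ : ‖m₂‖ = 1)
    (hli : ∀ a b : ℝ, a • m₁ + b • m₂ = 0 → a = 0 ∧ b = 0)
    (d₁ d₂ nv : V3)
    (hd₁span : d₁ ∈ Submodule.span ℝ ({m₁, m₂} : Set V3))
    (hd₁ : ‖d₁‖ = 1) (hd₁m₂ : ⟪d₁, m₂⟫ = 0) (hd₁m₁ : 0 < ⟪d₁, m₁⟫)
    (hd₂span : d₂ ∈ Submodule.span ℝ ({m₁, m₂} : Set V3))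
    (hd₂ : ‖d₂‖ = 1) (hd₂m₁ : ⟪d₂, m₁⟫ = 0) (hd₂m₂ : 0 < ⟪d₂, m₂⟫)
    (hn : ‖nv‖ = 1) (hnm₁ : ⟪nv, m₁⟫ = 0) (hnm₂ : ⟪nv, m₂⟫ = 0) :
    ∃ c : ℝ, 0 < c ∧
      ∀ V : Set V3, IsOpen V →
      ∀ e₁ e₂ f₁ f₂ : V3, ONBperp m₁ e₁ e₂ → ONBperp m₂ f₁ f₂ →
      ∀ s₁ s₂ : V3 → V3, IntegrableOn s₁ V → IntegrableOn s₂ V →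
        (∀ᵐ x ∂volume.restrict V, ⟪s₁ x, m₁⟫ = 0) →
        (∀ᵐ x ∂volume.restrict V, ⟪s₂ x, m₂⟫ = 0) →
        ENNReal.ofReal c *
            (dirTV V d₁ (fun x => ‖s₂ x‖) + dirTV V d₂ (fun x => ‖s₁ x‖) +
              dirTV V nv (fun x => ‖s₁ x‖) + dirTV V nv (fun x => ‖s₂ x‖)) ≤
          PTV V e₁ e₂ s₁ + PTV V f₁ f₂ s₂ := by
  refine ⟨1 / 2, by norm_num, ?_⟩
  intro V hV e₁ e₂ f₁ f₂ he hf s₁ s₂ hs₁ hs₂ _ _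
  have a1 := dirTV_le_PTV m₂ f₁ f₂ d₁ hm₂ hf hd₁ hd₁m₂ V hV s₂ hs₂
  have a2 := dirTV_le_PTV m₁ e₁ e₂ d₂ hm₁ he hd₂ hd₂m₁ V hV s₁ hs₁
  have a3 := dirTV_le_PTV m₁ e₁ e₂ nv hm₁ he hn hnm₁ V hV s₁ hs₁
  have a4 := dirTV_le_PTV m₂ f₁ f₂ nv hm₂ hf hn hnm₂ V hV s₂ hs₂
  have hhalf : ENNReal.ofReal (1 / 2) = 2⁻¹ := by
    rw [one_div, ENNReal.ofReal_inv_of_pos (by norm_num)]; simp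
  calc _ ≤ ENNReal.ofReal (1 / 2) * (PTV V f₁ f₂ s₂ + PTV V e₁ e₂ s₁ +
        PTV V e₁ e₂ s₁ + PTV V f₁ f₂ s₂) := by gcongr
    _ = ENNReal.ofReal (1 / 2) * (2 * (PTV V e₁ e₂ s₁ + PTV V f₁ f₂ s₂)) := by
        congr 1; ring
    _ = PTV V e₁ e₂ s₁ + PTV V f₁ f₂ s₂ := by
        rw [hhalf, ← mul_assoc, ENNReal.inv_mul_cancel (by norm_num) (by norm_num), one_mul]

end
end

section
/- Let l_1, l_2 > 0 and Q = (0,l_1)×(0,l_2) ⊂ ℝ². Let f, g : Q → ℝⁿ be measurable with |f(x)||g(x)| = 0 for a.e. x ∈ Q. Define ω_1 := { x_1 ∈ (0,l_1) : f(x_1,x_2) ≠ 0 for a.e. x_2 ∈ (0,l_2) } and ω_2 := { x_2 ∈ (0,l_2) : g(x_1,x_2) ≠ 0 for a.e. x_1 ∈ (0,l_1) }. Then at least one of ω_1, ω_2 has one-dimensional Lebesgue measure zero. -/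
open MeasureTheory Set

/-- The zero set of `h` over the set of rows on which `h` is a.e. nonzero is null. -/
lemma aux_null {n : ℕ} (l₁ l₂ : ℝ) (h : ℝ × ℝ → EuclideanSpace ℝ (Fin n)) (hh : Measurable h) :
    volume {p : ℝ × ℝ | p.1 ∈ {x₁ ∈ Ioo 0 l₁ |
        ∀ᵐ x₂ ∂(volume : Measure ℝ), x₂ ∈ Ioo 0 l₂ → h (x₁, x₂) ≠ 0} ∧
        p.2 ∈ Ioo 0 l₂ ∧ h p = 0} = 0 := by
  have hT : MeasurableSet {p : ℝ × ℝ | p.2 ∈ Ioo 0 l₂ ∧ h p = 0} :=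
    (measurable_snd measurableSet_Ioo).inter (hh (measurableSet_singleton 0))
  have hA : MeasurableSet {x₁ ∈ Ioo 0 l₁ |
        ∀ᵐ x₂ ∂(volume : Measure ℝ), x₂ ∈ Ioo 0 l₂ → h (x₁, x₂) ≠ 0} := by
    have h1 := measurable_measure_prodMk_left (ν := (volume : Measure ℝ)) hT
    have h2 := (measurableSet_Ioo (a := (0:ℝ)) (b := l₁)).inter
      (h1 (measurableSet_singleton 0))
    convert h2 using 1
    ext x
    simp [ae_iff, and_assoc]
  have hS := (measurable_fst (β := ℝ) hA).inter hT
  change volume (_ ∩ _) = 0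
  rw [Measure.volume_eq_prod]
  refine (Measure.measure_prod_null hS).2 (Filter.Eventually.of_forall fun x => ?_)
  by_cases hx : x ∈ {x₁ ∈ Ioo 0 l₁ |
        ∀ᵐ x₂ ∂(volume : Measure ℝ), x₂ ∈ Ioo 0 l₂ → h (x₁, x₂) ≠ 0}
  · refine measure_mono_null ?_ (ae_iff.1 hx.2)
    rintro y ⟨_, hy, hy0⟩ hc
    exact hc hy hy0
  · refine measure_mono_null (t := ∅) ?_ measure_empty
    rintro y ⟨hy, _⟩
    exact hx hy

/-- If `f, g : Q → ℝⁿ` are measurable on `Q = (0,l₁) × (0,l₂)` and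
`|f(x)||g(x)| = 0` a.e. on `Q`, then at least one of the sets
`ω₁ = {x₁ : f(x₁,·) ≠ 0 a.e.}` and `ω₂ = {x₂ : g(·,x₂) ≠ 0 a.e.}` is null. -/
theorem exclusion_of_mixed_activity
    (n : ℕ) (l₁ l₂ : ℝ) (hl₁ : 0 < l₁) (hl₂ : 0 < l₂)
    (f g : ℝ × ℝ → EuclideanSpace ℝ (Fin n))
    (hf : Measurable f) (hg : Measurable g)
    (hfg : ∀ᵐ x ∂(volume.restrict (Ioo 0 l₁ ×ˢ Ioo 0 l₂)), ‖f x‖ * ‖g x‖ = 0) :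
    volume {x₁ ∈ Ioo 0 l₁ |
        ∀ᵐ x₂ ∂(volume : Measure ℝ), x₂ ∈ Ioo 0 l₂ → f (x₁, x₂) ≠ 0} = 0 ∨
    volume {x₂ ∈ Ioo 0 l₂ |
        ∀ᵐ x₁ ∂(volume : Measure ℝ), x₁ ∈ Ioo 0 l₁ → g (x₁, x₂) ≠ 0} = 0 := by
  rw [← mul_eq_zero, ← Measure.prod_prod, ← Measure.volume_eq_prod]
  have h1 := aux_null l₁ l₂ f hf
  have h2 := aux_null l₂ l₁ (fun p => g p.swap) (hg.comp measurable_swap)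
  have h3 := (Measure.measurePreserving_swap (μ := (volume : Measure ℝ))
    (ν := (volume : Measure ℝ))).quasiMeasurePreserving.preimage_null h2
  rw [ae_restrict_iff' (measurableSet_Ioo.prod measurableSet_Ioo), ae_iff] at hfg
  refine measure_mono_null ?_ (measure_union_null hfg (measure_union_null h1 h3))
  rintro ⟨x, y⟩ ⟨hx, hy⟩
  by_cases hf0 : f (x, y) = 0
  · exact Or.inr (Or.inl ⟨hx, hy.1, hf0⟩)
  by_cases hg0 : g (x, y) = 0
  · exact Or.inr (Or.inr ⟨hy, hx.1, hg0⟩)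
  · refine Or.inl fun hc => ?_
    have := hc ⟨hx.1, hy.1⟩
    simp [hf0, hg0] at this
end

section
/- Let l_1, l_2 > 0, Q = (0,l_1)×(0,l_2) ⊂ ℝ², and let f, g : Q → ℝⁿ be continuously differentiable with f, g, ∂f/∂x_2 and ∂g/∂x_1 integrable over Q. Suppose |f(x)||g(x)| = 0 for a.e. x ∈ Q. Then at least one of the following two inequalities holds: ∫_Q |f(x)| dx ≤ l_2 ∫_Q |∂f/∂x_2 (x)| dx, or ∫_Q |g(x)| dx ≤ l_1 ∫_Q |∂g/∂x_1 (x)| dx. -/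
open MeasureTheory Set

lemma aux_one {E : Type*} [NormedAddCommGroup E] [NormedSpace ℝ E] [CompleteSpace E]
    (l : ℝ) (u u' : ℝ → E) (hd : ∀ t ∈ Ioo 0 l, HasDerivAt u (u' t) t)
    (hc : ContinuousOn u' (Ioo 0 l)) (c : ℝ) (hcm : c ∈ Ioo 0 l) (h0 : u c = 0) :
    ∫⁻ t in Ioo 0 l, ‖u t‖ₑ ≤ ENNReal.ofReal l * ∫⁻ t in Ioo 0 l, ‖u' t‖ₑ := by
  have key : ∀ t ∈ Ioo 0 l, ‖u t‖ₑ ≤ ∫⁻ s in Ioo 0 l, ‖u' s‖ₑ := by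
    intro t ht
    have hsub : uIcc c t ⊆ Ioo 0 l := (ordConnected_Ioo).uIcc_subset hcm ht
    have hft := intervalIntegral.integral_eq_sub_of_hasDerivAt (fun x hx => hd x (hsub hx))
      ((hc.mono hsub).intervalIntegrable)
    rw [h0, sub_zero] at hft
    have h1 : ‖u t‖ₑ = ‖∫ s in uIoc c t, u' s‖ₑ := by
      rw [← hft, ← ofReal_norm, ← ofReal_norm,
        intervalIntegral.norm_integral_eq_norm_integral_uIoc]
    rw [h1]
    refine (enorm_integral_le_lintegral_enorm _).trans ?_
    exact lintegral_mono_set (uIoc_subset_uIcc.trans hsub)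
  calc ∫⁻ t in Ioo 0 l, ‖u t‖ₑ ≤ ∫⁻ t in Ioo 0 l, (∫⁻ s in Ioo 0 l, ‖u' s‖ₑ) :=
        setLIntegral_mono' measurableSet_Ioo key
    _ = _ := by
        rw [setLIntegral_const, Real.volume_Ioo, sub_zero, mul_comm]

lemma aux_real {E : Type*} [NormedAddCommGroup E] (μ : Measure (ℝ × ℝ)) (l : ℝ) (hl : 0 < l)
    (u v : ℝ × ℝ → E) (hu : Integrable u μ) (hv : Integrable v μ)
    (h : ∫⁻ x, ‖u x‖ₑ ∂μ ≤ ENNReal.ofReal l * ∫⁻ x, ‖v x‖ₑ ∂μ) :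
    ∫ x, ‖u x‖ ∂μ ≤ l * ∫ x, ‖v x‖ ∂μ := by
  rw [integral_norm_eq_lintegral_enorm hu.1, integral_norm_eq_lintegral_enorm hv.1]
  have := ENNReal.toReal_mono (ENNReal.mul_ne_top ENNReal.ofReal_ne_top hv.2.ne) h
  rwa [ENNReal.toReal_mul, ENNReal.toReal_ofReal hl.le] at this

lemma aux_zero {E : Type*} [NormedAddCommGroup E] (U : Set (ℝ × ℝ)) (hU : IsOpen U)
    (f g : ℝ × ℝ → E) (hf : ContinuousOn f U) (hg : ContinuousOn g U)
    (h : ∀ᵐ x ∂(volume.restrict U), ‖f x‖ * ‖g x‖ = 0) :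
    ∀ x ∈ U, ‖f x‖ * ‖g x‖ = 0 := by
  have := Measure.eqOn_open_of_ae_eq (μ := (volume : Measure (ℝ × ℝ)))
    (f := fun x => ‖f x‖ * ‖g x‖) (g := fun _ => (0 : ℝ)) h hU
    (hf.norm.mul hg.norm) continuousOn_const
  exact this

/-- If `f, g` are `C¹` on `Q = (0,l₁) × (0,l₂)`, with `f`, `g`, `∂f/∂x₂`,
`∂g/∂x₁` integrable on `Q`, and `|f(x)||g(x)| = 0` a.e. on `Q`, then
`∫_Q |f| ≤ l₂ ∫_Q |∂f/∂x₂|` or `∫_Q |g| ≤ l₁ ∫_Q |∂g/∂x₁|`. -/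
theorem dichotomy_poincare_estimate
    (n : ℕ) (l₁ l₂ : ℝ) (hl₁ : 0 < l₁) (hl₂ : 0 < l₂)
    (f g : ℝ × ℝ → EuclideanSpace ℝ (Fin n))
    (hf : ContDiffOn ℝ 1 f (Ioo 0 l₁ ×ˢ Ioo 0 l₂))
    (hg : ContDiffOn ℝ 1 g (Ioo 0 l₁ ×ˢ Ioo 0 l₂))
    (hfi : IntegrableOn f (Ioo 0 l₁ ×ˢ Ioo 0 l₂))
    (hgi : IntegrableOn g (Ioo 0 l₁ ×ˢ Ioo 0 l₂))
    (hfd : IntegrableOn (fun x => fderiv ℝ f x (0, 1)) (Ioo 0 l₁ ×ˢ Ioo 0 l₂))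
    (hgd : IntegrableOn (fun x => fderiv ℝ g x (1, 0)) (Ioo 0 l₁ ×ˢ Ioo 0 l₂))
    (hfg : ∀ᵐ x ∂(volume.restrict (Ioo 0 l₁ ×ˢ Ioo 0 l₂)), ‖f x‖ * ‖g x‖ = 0) :
    (∫ x in Ioo 0 l₁ ×ˢ Ioo 0 l₂, ‖f x‖ ≤
        l₂ * ∫ x in Ioo 0 l₁ ×ˢ Ioo 0 l₂, ‖fderiv ℝ f x (0, 1)‖) ∨
    (∫ x in Ioo 0 l₁ ×ˢ Ioo 0 l₂, ‖g x‖ ≤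
        l₁ * ∫ x in Ioo 0 l₁ ×ˢ Ioo 0 l₂, ‖fderiv ℝ g x (1, 0)‖) := by
  have hU : IsOpen (Ioo 0 l₁ ×ˢ Ioo 0 l₂ : Set (ℝ × ℝ)) := isOpen_Ioo.prod isOpen_Ioo
  have hz := aux_zero _ hU f g hf.continuousOn hg.continuousOn hfg
  have hprod : (volume : Measure (ℝ × ℝ)).restrict (Ioo 0 l₁ ×ˢ Ioo 0 l₂) =
      (volume.restrict (Ioo 0 l₁)).prod (volume.restrict (Ioo 0 l₂)) := by
    rw [Measure.prod_restrict]; rfl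
  have hder : ∀ h : ℝ × ℝ → EuclideanSpace ℝ (Fin n),
      ContDiffOn ℝ 1 h (Ioo 0 l₁ ×ˢ Ioo 0 l₂) → ∀ x ∈ (Ioo 0 l₁ ×ˢ Ioo 0 l₂ : Set (ℝ × ℝ)),
      HasFDerivAt h (fderiv ℝ h x) x := fun h hh x hx =>
    ((hh.differentiableOn one_ne_zero).differentiableAt (hU.mem_nhds hx)).hasFDerivAt
  by_cases H : ∀ a ∈ Ioo 0 l₁, ∃ b ∈ Ioo 0 l₂, f (a, b) = 0
  · left
    refine aux_real _ _ hl₂ _ _ hfi hfd ?_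
    have m1 := hfi.1.enorm
    have m2 := hfd.1.enorm
    rw [hprod] at m1 m2 ⊢
    rw [lintegral_prod _ m1, lintegral_prod _ m2, ← lintegral_const_mul' _ _ ENNReal.ofReal_ne_top]
    refine setLIntegral_mono' measurableSet_Ioo fun a ha => ?_
    obtain ⟨b, hb, h0⟩ := H a ha
    refine aux_one l₂ (fun t => f (a, t)) (fun t => fderiv ℝ f (a, t) (0, 1)) ?_ ?_ b hb h0
    · intro t ht
      exact (hder f hf (a, t) ⟨ha, ht⟩).comp_hasDerivAt t
        ((hasDerivAt_const t a).prodMk (hasDerivAt_id t))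
    · have := hf.continuousOn_fderiv_of_isOpen hU le_rfl
      exact (this.comp (f := fun t : ℝ => (a, t)) (by fun_prop)
        (fun t ht => ⟨ha, ht⟩)).clm_apply continuousOn_const
  · right
    push Not at H
    obtain ⟨a, ha, H⟩ := H
    refine aux_real _ _ hl₁ _ _ hgi hgd ?_
    have m1 := hgi.1.enorm
    have m2 := hgd.1.enorm
    rw [hprod] at m1 m2 ⊢
    rw [lintegral_prod_symm _ m1, lintegral_prod_symm _ m2,
      ← lintegral_const_mul' _ _ ENNReal.ofReal_ne_top]
    refine setLIntegral_mono' measurableSet_Ioo fun b hb => ?_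
    have h0 : g (a, b) = 0 := by
      have := hz (a, b) ⟨ha, hb⟩
      simpa [H b hb] using this
    refine aux_one l₁ (fun t => g (t, b)) (fun t => fderiv ℝ g (t, b) (1, 0)) ?_ ?_ a ha h0
    · intro t ht
      exact (hder g hg (t, b) ⟨ht, hb⟩).comp_hasDerivAt t
        ((hasDerivAt_id t).prodMk (hasDerivAt_const t b))
    · have := hg.continuousOn_fderiv_of_isOpen hU le_rfl
      exact (this.comp (f := fun t : ℝ => (t, b)) (by fun_prop)
        (fun t ht => ⟨ht, hb⟩)).clm_apply continuousOn_const
end
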